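/- arXiv:2506.09019 — 3 statements merged into one kernel-verified Lean document; each statement's English description precedes it below -/
import Mathlib

section
/- Let k be a field of characteristic 2 and d ≥ 1. The real sequence e ↦ dim_k( k[x_0,…,x_d]/(x_0^{2^e},…,x_d^{2^e}, P_d) ) / 2^{d·e} converges as e → ∞; its limit (the Hilbert–Kunz multiplicity of the A_2 singularity in characteristic 2) equals (2^{m+1} + 1)/(2^{m+1} − 1) when d = 2m is even, and equals (2^m + 1)/2^m when d = 2m + 1 is odd. -/
open MvPolynomial

/-- The Hilbert–Kunz function of the hypersurface defined by `f` in `n` variables,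
in characteristic `p`, at level `e`. -/
noncomputable def HKfun (k : Type*) [Field k] (n p e : ℕ)
    (f : MvPolynomial (Fin n) k) : ℕ :=
  Module.finrank k
    (MvPolynomial (Fin n) k ⧸
      Ideal.span
        (Set.range (fun i : Fin n => (X i : MvPolynomial (Fin n) k) ^ p ^ e) ∪ {f}))

/-- The defining equation `P_d` of the `A₂` singularity in characteristic 2:
`P_d = x_0x_1 + ⋯ + x_{d−3}x_{d−2} + x_{d−1}² + x_d³` for `d` odd and
`P_d = x_0x_1 + ⋯ + x_{d−2}x_{d−1} + x_d³` for `d` even. -/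
noncomputable def A2poly (k : Type*) [Field k] (d : ℕ) : MvPolynomial (Fin (d + 1)) k :=
  (∑ i : Fin (d / 2),
      X (⟨2 * i, by omega⟩ : Fin (d + 1)) * X (⟨2 * i + 1, by omega⟩ : Fin (d + 1))) +
    (if Odd d then X (⟨d - 1, by omega⟩ : Fin (d + 1)) ^ 2 else 0) +
    X (⟨d, by omega⟩ : Fin (d + 1)) ^ 3

namespace A2HK
open Finset

/-- Rademacher sign. -/
def rho (b i : ℕ) : ℤ := if i.testBit b then -1 else 1

/-- Triangle wave. -/
def eps (b n : ℕ) : ℤ := ∑ i ∈ range n, rho b i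

lemma rho_sum (e b : ℕ) (hb : b < e) : ∑ i ∈ range (2 ^ e), rho b i = 0 := by
  refine Finset.sum_involution (fun i _ => i ^^^ 2 ^ b) ?_ ?_ ?_ ?_
  · intro i _
    simp only [rho, Nat.testBit_xor, Nat.testBit_two_pow_self]
    cases i.testBit b <;> simp
  · intro i _ _ h
    have h1 := congrArg (fun x => x.testBit b) h
    simp [Nat.testBit_xor, Nat.testBit_two_pow_self] at h1
  · intro i hi
    rw [mem_range] at *
    exact Nat.xor_lt_two_pow hi (Nat.pow_lt_pow_right (by norm_num) hb)
  · intro i _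
    simp

lemma rho_orth (e b c : ℕ) (hb : b < e) (hbc : b ≠ c) :
    ∑ i ∈ range (2 ^ e), rho b i * rho c i = 0 := by
  refine Finset.sum_involution (fun i _ => i ^^^ 2 ^ b) ?_ ?_ ?_ ?_
  · intro i _
    simp only [rho, Nat.testBit_xor, Nat.testBit_two_pow_self, Nat.testBit_two_pow_of_ne hbc]
    cases i.testBit b <;> cases i.testBit c <;> simp
  · intro i _ _ h
    have h1 := congrArg (fun x => x.testBit b) h
    simp [Nat.testBit_xor, Nat.testBit_two_pow_self] at h1
  · intro i hi
    rw [mem_range] at *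
    exact Nat.xor_lt_two_pow hi (Nat.pow_lt_pow_right (by norm_num) hb)
  · intro i _
    simp

lemma rho_sq (b i : ℕ) : rho b i * rho b i = 1 := by
  unfold rho; split_ifs <;> simp

lemma eps_zero (b : ℕ) : eps b 0 = 0 := by simp [eps]
lemma eps_succ (b n : ℕ) : eps b (n + 1) = eps b n + rho b n := by simp [eps, sum_range_succ]
lemma eps_one (b : ℕ) : eps b 1 = 1 := by simp [eps, rho]

lemma eps_add_low (e b a : ℕ) (hb : b < e) : eps b (2 ^ e + a) = eps b a := by
  unfold eps
  rw [sum_range_add, rho_sum e b hb, zero_add]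
  refine sum_congr rfl fun i _ => ?_
  simp [rho, Nat.testBit_two_pow_add_gt hb]

lemma rho_lt (e i : ℕ) (h : i < 2 ^ e) : rho e i = 1 := by
  simp [rho, Nat.testBit_lt_two_pow h]

lemma eps_small (e n : ℕ) (hn : n ≤ 2 ^ e) : eps e n = n := by
  unfold eps
  rw [sum_congr rfl (g := fun _ => (1 : ℤ))]
  · simp
  · intro i hi
    rw [mem_range] at hi
    exact rho_lt e i (by omega)

lemma eps_add_top (e a : ℕ) (ha : a ≤ 2 ^ e) : eps e (2 ^ e + a) = 2 ^ e - a := by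
  unfold eps
  rw [sum_range_add, sum_congr rfl (g := fun _ => (1 : ℤ))]
  · rw [sum_congr (s₁ := range a) rfl (g := fun _ => (-1 : ℤ))]
    · simp; ring
    · intro i hi
      rw [mem_range] at hi
      simp only [rho, Nat.testBit_two_pow_add_eq, Nat.testBit_lt_two_pow (show i < 2 ^ e by omega)]
      simp
  · intro i hi
    rw [mem_range] at hi
    exact rho_lt e i (by omega)

lemma sum_range_id_int (n : ℕ) : 2 * ∑ i ∈ range n, (i : ℤ) = n * (n - 1) := by
  induction n with
  | zero => simp
  | succ n ih => rw [sum_range_succ, mul_add, ih]; push_cast; ring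

/-- The combinatorial evaluation from the three recursions. -/
theorem E_formula (D : ℕ → ℕ → ℕ → ℤ)
    (h12 : ∀ a b c, D a b c = D b a c) (h23 : ∀ a b c, D a b c = D a c b)
    (h0 : ∀ b c, D 0 b c = 0) (h111 : D 1 1 1 = 1)
    (c1 : ∀ e a b c, b ≤ 2 ^ e → c ≤ 2 ^ e → D (2 ^ e + a) b c = b * c)
    (c2 : ∀ e a b c, a ≤ 2 ^ e → b ≤ 2 ^ e → c ≤ 2 ^ e →
      D (2 ^ e + a) (2 ^ e + b) c = 2 ^ e * c + D a b c)
    (c3 : ∀ e a b c, a ≤ 2 ^ e → b ≤ 2 ^ e → c ≤ 2 ^ e →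
      D (2 ^ e + a) (2 ^ e + b) (2 ^ e + c) = 2 ^ e * 2 ^ e + a * b + b * c + c * a)
    (e n j : ℕ) (hn : n ≤ 2 ^ e) (hj : j ≤ 2 ^ e) :
    2 * ∑ l ∈ range (2 ^ e), D n l j + D n (2 ^ e) j =
      2 ^ e * n * j + ∑ b ∈ range e, 2 ^ b * eps b n * eps b j := by
  induction e generalizing n j with
  | zero =>
    simp only [pow_zero, range_one, sum_singleton, range_zero, sum_empty, add_zero, one_mul]
    simp only [pow_zero] at hn hj
    rw [h12 n 0 j, h0]
    interval_cases n
    · rw [h0]; simp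
    · interval_cases j
      · rw [h23, h12, h0]; simp
      · rw [h111]; simp
  | succ e ih =>
    have hP : (2 : ℕ) ^ (e + 1) = 2 ^ e + 2 ^ e := by ring
    have hPz : (2 : ℤ) ^ (e + 1) = 2 ^ e + 2 ^ e := by ring
    have hone : 1 ≤ 2 ^ e := Nat.one_le_two_pow
    rw [sum_range_succ]
    have split : ∀ f : ℕ → ℤ, ∑ l ∈ range (2 ^ (e + 1)), f l
        = ∑ l ∈ range (2 ^ e), f l + ∑ l ∈ range (2 ^ e), f (2 ^ e + l) := by
      intro f; rw [hP, sum_range_add]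
    rw [split, hP, hPz]
    have hid := sum_range_id_int (2 ^ e)
    push_cast at hid
    have lowlow : ∀ n j, n ≤ 2 ^ e → j ≤ 2 ^ e →
        D n (2 ^ e) j = n * j := by
      intro n j h h'
      rw [h12]; simpa using c1 e 0 n j h h'
    have key : ∀ n j, n ≤ 2 ^ e → j ≤ 2 ^ e + 2 ^ e →
      2 * (∑ l ∈ range (2 ^ e), D n l j + ∑ l ∈ range (2 ^ e), D n (2 ^ e + l) j)
        + D n (2 ^ e + 2 ^ e) j =
      (2 ^ e + 2 ^ e) * n * j + (∑ b ∈ range e, 2 ^ b * eps b n * eps b j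
        + 2 ^ e * eps e n * eps e j) := by
      intro n j hn hj
      by_cases hj' : j ≤ 2 ^ e
      · have := ih n j hn hj'
        rw [lowlow n j hn hj'] at this
        rw [eps_small e n hn, eps_small e j hj']
        have t : ∀ l, D n (2 ^ e + l) j = n * j := fun l => by rw [h12]; exact c1 e l n j hn hj'
        rw [t, sum_congr rfl fun l _ => t l]
        simp only [sum_const, card_range, nsmul_eq_mul]
        push_cast
        linear_combination this
      · obtain ⟨a, rfl⟩ := Nat.exists_eq_add_of_le (show 2 ^ e ≤ j by omega)
        have ha : a ≤ 2 ^ e := by omega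
        have := ih n a hn ha
        rw [lowlow n a hn ha] at this
        rw [eps_small e n hn, eps_add_top e a ha]
        have lo : ∑ b ∈ range e, 2 ^ b * eps b n * eps b (2 ^ e + a) =
            ∑ b ∈ range e, 2 ^ b * eps b n * eps b a :=
          sum_congr rfl fun b hb => by rw [eps_add_low e b a (mem_range.1 hb)]
        rw [lo]
        have t1 : ∀ l ∈ range (2 ^ e), D n l (2 ^ e + a) = n * l := fun l hl => by
          rw [mem_range] at hl
          rw [h23, h12, c1 e a n l hn (by omega)]
        have t2 : ∀ l ≤ 2 ^ e, D n (2 ^ e + l) (2 ^ e + a) = 2 ^ e * n + D n l a := fun l hl => by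
          rw [h12, h23, c2 e l a n hl ha hn, h23 l a n, h12 l n a]
        have t2' : ∀ l ∈ range (2 ^ e), D n (2 ^ e + l) (2 ^ e + a) = 2 ^ e * n + D n l a :=
          fun l hl => t2 l (mem_range.1 hl).le
        rw [t2 _ le_rfl, lowlow n a hn ha, sum_congr rfl t1, sum_congr rfl t2', sum_add_distrib,
          ← mul_sum]
        simp only [sum_const, card_range, nsmul_eq_mul]
        push_cast
        linear_combination this + (n : ℤ) * hid
    by_cases hn' : n ≤ 2 ^ e
    · exact key n j hn' (by omega)
    by_cases hj' : j ≤ 2 ^ e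
    · have := key j n hj' (by omega)
      have sw : ∀ l, D n l j = D j l n := fun l => by rw [h12, h23, h12]
      rw [sum_congr rfl fun l _ => sw l, sum_congr rfl fun l _ => sw (2 ^ e + l), sw, this]
      rw [sum_congr rfl fun b _ => (mul_right_comm ((2 : ℤ) ^ b) (eps b n) (eps b j))]
      ring
    · obtain ⟨a, rfl⟩ := Nat.exists_eq_add_of_le (show 2 ^ e ≤ n by omega)
      obtain ⟨c, rfl⟩ := Nat.exists_eq_add_of_le (show 2 ^ e ≤ j by omega)
      have ha : a ≤ 2 ^ e := by omega
      have hc : c ≤ 2 ^ e := by omega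
      have := ih a c ha hc
      rw [lowlow a c ha hc] at this
      rw [eps_add_top e a ha, eps_add_top e c hc]
      have lo : ∑ b ∈ range e, 2 ^ b * eps b (2 ^ e + a) * eps b (2 ^ e + c) =
          ∑ b ∈ range e, 2 ^ b * eps b a * eps b c := sum_congr rfl fun b hb => by
        rw [eps_add_low e b a (mem_range.1 hb), eps_add_low e b c (mem_range.1 hb)]
      rw [lo]
      have t1 : ∀ l ∈ range (2 ^ e), D (2 ^ e + a) l (2 ^ e + c) = 2 ^ e * l + D a l c :=
        fun l hl => by
          rw [mem_range] at hl
          rw [h23, c2 e a c l ha hc hl.le, h23]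
      have t2 : ∀ l ≤ 2 ^ e, D (2 ^ e + a) (2 ^ e + l) (2 ^ e + c) =
          2 ^ e * 2 ^ e + a * c + (a + c) * l := fun l hl => by
        rw [c3 e a l c ha hl hc]; ring
      have t2' : ∀ l ∈ range (2 ^ e), D (2 ^ e + a) (2 ^ e + l) (2 ^ e + c) =
          2 ^ e * 2 ^ e + a * c + (a + c) * l := fun l hl => t2 l (mem_range.1 hl).le
      rw [t2 _ le_rfl, sum_congr rfl t1, sum_congr rfl t2', sum_add_distrib, sum_add_distrib,
        ← mul_sum, ← mul_sum]
      simp only [sum_const, card_range, nsmul_eq_mul]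
      push_cast
      linear_combination this + ((2 : ℤ) ^ e + a + c) * hid

lemma abel (q n : ℕ) (hn : n ≤ q) (φ : ℕ → ℤ) (h0 : φ 0 = 0) :
    φ n = ∑ l ∈ range q, (((min n (l + 1) : ℕ) : ℤ) - (min n l : ℕ)) * (φ (l + 1) - φ l) := by
  have : ∀ q, φ (min n q) =
      ∑ l ∈ range q, (((min n (l + 1) : ℕ) : ℤ) - (min n l : ℕ)) * (φ (l + 1) - φ l) := by
    intro q
    induction q with
    | zero => simp [h0]
    | succ q ih =>
      rw [sum_range_succ, ← ih]
      rcases le_or_gt n q with h | h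
      · rw [min_eq_left h, min_eq_left (by omega)]; simp
      · rw [min_eq_right h.le, min_eq_right (by omega)]; push_cast; ring
  rw [← this q, min_eq_left hn]

/-- The weights. -/
def wt (e b : ℕ) (g : ℕ → ℤ) : ℤ := ∑ i ∈ range (2 ^ e), rho b i * (g (i + 1) - g i)

lemma wt_step (e b : ℕ) (hb : b < e) (g g' : ℕ → ℤ) (A : ℤ)
    (h : ∀ j ≤ 2 ^ e, g' j = A * j + ∑ c ∈ range e, 2 ^ c * wt e c g * eps c j) :
    wt e b g' = 2 ^ b * 2 ^ e * wt e b g := by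
  have : ∀ i ∈ range (2 ^ e), rho b i * (g' (i + 1) - g' i) =
      A * rho b i + ∑ c ∈ range e, 2 ^ c * wt e c g * (rho b i * rho c i) := by
    intro i hi
    rw [mem_range] at hi
    rw [h _ hi, h _ hi.le]
    simp only [eps_succ, mul_add, sum_add_distrib, mul_sub, mul_sum]
    push_cast
    have : ∑ x ∈ range e, rho b i * (2 ^ x * wt e x g * rho x i)
      = ∑ x ∈ range e, 2 ^ x * wt e x g * (rho b i * rho x i) :=
      sum_congr rfl fun _ _ => by ring
    rw [this]; ring
  unfold wt
  rw [sum_congr rfl this, sum_add_distrib, ← mul_sum, rho_sum e b hb, sum_comm,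
    sum_eq_single b]
  · rw [← mul_sum]
    simp only [rho_sq, sum_const, card_range, wt]; simp; ring
  · intro c _ hc
    rw [← mul_sum, rho_orth e b c hb hc.symm, mul_zero]
  · intro h; exact absurd (mem_range.2 hb) h

end A2HK
namespace A2HK
section colon
set_option linter.unusedSectionVars false
variable (k : Type*) {R : Type*} [Field k] [CommRing R] [Algebra k R]

/-- The quotient by `I` is finite of dimension `n`. -/
def HasDim (I : Ideal R) (n : ℕ) : Prop :=
  Module.Finite k (R ⧸ I) ∧ Module.finrank k (R ⧸ I) = n

variable {k}

lemma HasDim.of_le {I J : Ideal R} {n : ℕ} (h : HasDim k I n) (hIJ : I ≤ J) :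
    HasDim k J (Module.finrank k (R ⧸ J)) ∧ Module.finrank k (R ⧸ J) ≤ n := by
  obtain ⟨h1, h2⟩ := h
  let ψ := (Ideal.Quotient.factorₐ k hIJ).toLinearMap
  have hs : Function.Surjective ψ := Ideal.Quotient.factor_surjective hIJ
  refine ⟨⟨Module.Finite.of_surjective ψ hs, rfl⟩, ?_⟩
  rw [← h2]
  exact LinearMap.finrank_le_finrank_of_surjective hs

lemma HasDim.top : HasDim k (⊤ : Ideal R) 0 := by
  have : Subsingleton (R ⧸ (⊤ : Ideal R)) := Ideal.Quotient.subsingleton_iff.2 rfl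
  exact ⟨inferInstance, Module.finrank_zero_of_subsingleton⟩

lemma colon_aux {I J : Ideal R} {f : R} (h : ∀ x, x ∈ J ↔ f * x ∈ I) :
    ∃ φ : (R ⧸ J) →ₗ[k] (R ⧸ I), Function.Injective φ ∧
      LinearMap.range φ = LinearMap.ker
        (Ideal.Quotient.factorₐ k (le_sup_left : I ≤ I ⊔ Ideal.span {f})).toLinearMap := by
  have hJ : J.restrictScalars k ≤ (I.restrictScalars k).comap (LinearMap.mulLeft k f) := by
    intro x hx
    exact (h x).1 hx
  let φ : (R ⧸ J) →ₗ[k] (R ⧸ I) :=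
    Submodule.mapQ (J.restrictScalars k) (I.restrictScalars k) (LinearMap.mulLeft k f) hJ
  have hφ : ∀ x, φ (Ideal.Quotient.mk J x) = Ideal.Quotient.mk I (f * x) := fun x => rfl
  refine ⟨φ, ?_, ?_⟩
  · rw [injective_iff_map_eq_zero]
    intro y hy
    obtain ⟨x, rfl⟩ := Ideal.Quotient.mk_surjective y
    rw [hφ, Ideal.Quotient.eq_zero_iff_mem] at hy
    rw [Ideal.Quotient.eq_zero_iff_mem]
    exact (h x).2 hy
  · ext y
    obtain ⟨x, rfl⟩ := Ideal.Quotient.mk_surjective y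
    rw [LinearMap.mem_ker]
    change _ ↔ Ideal.Quotient.mk (I ⊔ Ideal.span {f}) x = 0
    rw [Ideal.Quotient.eq_zero_iff_mem, sup_comm, Ideal.mem_span_singleton_sup]
    constructor
    · rintro ⟨z, hz⟩
      obtain ⟨w, rfl⟩ := Ideal.Quotient.mk_surjective z
      rw [hφ, Ideal.Quotient.eq] at hz
      exact ⟨w, -(f * w - x), I.neg_mem hz, by ring⟩
    · rintro ⟨w, b, hb, hw⟩
      refine ⟨Ideal.Quotient.mk J w, ?_⟩
      rw [hφ, Ideal.Quotient.eq]
      have : f * w - x = -b := by rw [← hw]; ring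
      rw [this]; exact I.neg_mem hb

lemma HasDim.colon {I J : Ideal R} {m n : ℕ} {f : R} (h : ∀ x, x ∈ J ↔ f * x ∈ I)
    (hJ : HasDim k J m) (hI : HasDim k (I ⊔ Ideal.span {f}) n) : HasDim k I (m + n) := by
  obtain ⟨φ, hi, hr⟩ := colon_aux (k := k) h
  set ψ := (Ideal.Quotient.factorₐ k (le_sup_left : I ≤ I ⊔ Ideal.span {f})).toLinearMap
  have hs : Function.Surjective ψ := Ideal.Quotient.factor_surjective le_sup_left
  obtain ⟨f1, d1⟩ := hJ
  obtain ⟨f2, d2⟩ := hI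
  have fin : Module.Finite k (R ⧸ I) := by
    have n1 : IsNoetherian k (R ⧸ J) := inferInstance
    have n2 : IsNoetherian k (R ⧸ (I ⊔ Ideal.span {f})) := inferInstance
    have n3 : IsNoetherian k (R ⧸ I) := isNoetherian_of_range_eq_ker φ ψ hr
    exact Module.IsNoetherian.finite k _
  refine ⟨fin, ?_⟩
  have := LinearMap.finrank_range_add_finrank_ker ψ
  rw [← hr, LinearMap.finrank_range_of_inj hi, LinearMap.range_eq_top.2 hs, finrank_top, d1, d2] at this
  omega

lemma HasDim.congr {I J : Ideal R} {n : ℕ} (h : HasDim k I n) (e : I = J) : HasDim k J n := e ▸ h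

lemma HasDim.congr' {I : Ideal R} {m n : ℕ} (h : HasDim k I n) (e : n = m) : HasDim k I m := e ▸ h

lemma mem3 {a b c x : R} (u v w : R) (h : u * a + v * b + w * c = x) :
    x ∈ Ideal.span {a, b, c} :=
  Submodule.mem_span_triple.2 ⟨u, v, w, h⟩

lemma mem2 {a b x : R} (u v : R) (h : u * a + v * b = x) :
    x ∈ Ideal.span {a, b} := Ideal.mem_span_pair.2 ⟨u, v, h⟩

lemma span3_le {a b c : R} {I : Ideal R} (ha : a ∈ I) (hb : b ∈ I) (hc : c ∈ I) :
    Ideal.span {a, b, c} ≤ I := by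
  rw [Ideal.span_le]
  rintro x (rfl | rfl | rfl) <;> assumption

lemma span2_le {a b : R} {I : Ideal R} (ha : a ∈ I) (hb : b ∈ I) :
    Ideal.span {a, b} ≤ I := by
  rw [Ideal.span_le]
  rintro x (rfl | rfl) <;> assumption

lemma span1_le {a : R} {I : Ideal R} (ha : a ∈ I) : Ideal.span {a} ≤ I := by
  rw [Ideal.span_le]
  rintro x rfl; assumption

/-- Han's function. -/
noncomputable def DD (k : Type*) {R : Type*} [Field k] [CommRing R] [Algebra k R]
    (s t r : R) (a b c : ℕ) : ℕ :=
  Module.finrank k (R ⧸ Ideal.span {s ^ a, t ^ b, r ^ c})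

lemma DD_swap12 {s t r : R} (a b c : ℕ) : DD k s t r a b c = DD k t s r b a c := by
  unfold DD; rw [Set.insert_comm]

lemma DD_swap23 {s t r : R} (a b c : ℕ) : DD k s t r a b c = DD k s r t a c b := by
  unfold DD; rw [Set.pair_comm]

variable [IsDomain R]

lemma HasDim.pow_left {u v : R} {n : ℕ} (hu : Prime u) (huv : ¬ u ∣ v)
    (h : HasDim k (Ideal.span {u, v}) n) (a : ℕ) : HasDim k (Ideal.span {u ^ a, v}) (a * n) := by
  induction a with
  | zero =>
    rw [zero_mul]
    refine HasDim.top.congr ?_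
    symm
    rw [Ideal.eq_top_iff_one]
    exact mem2 1 0 (by simp)
  | succ a ih =>
    have : (a + 1) * n = n + a * n := by ring
    rw [this]
    refine HasDim.colon (f := u ^ a) ?_ h (ih.congr ?_)
    · intro x
      constructor
      · intro hx
        obtain ⟨α, β, rfl⟩ := Ideal.mem_span_pair.1 hx
        exact mem2 α (u ^ a * β) (by ring)
      · intro hx
        obtain ⟨α, β, hab⟩ := Ideal.mem_span_pair.1 hx
        have h1 : u ^ a ∣ v * β := ⟨x - α * u, by linear_combination hab⟩
        obtain ⟨γ, rfl⟩ := hu.pow_dvd_of_dvd_mul_left a huv h1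
        refine mem2 α γ ?_
        apply mul_left_cancel₀ (pow_ne_zero a hu.ne_zero)
        linear_combination hab
    · apply le_antisymm
      · exact span2_le (Ideal.mem_sup_right (Ideal.mem_span_singleton_self _))
          (Ideal.mem_sup_left (mem2 0 1 (by ring)))
      · refine sup_le (span2_le (mem2 u 0 (by ring)) (mem2 0 1 (by ring)))
          (span1_le (mem2 1 0 (by ring)))

lemma HasDim.pow_both {u v : R} {n : ℕ} (hu : Prime u) (hv : Prime v) (huv : ¬ u ∣ v)
    (hvu : ¬ v ∣ u) (h : HasDim k (Ideal.span {u, v}) n) (a b : ℕ) :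
    HasDim k (Ideal.span {u ^ a, v ^ b}) (a * b * n) := by
  have h1 : HasDim k (Ideal.span {v, u}) n := h.congr (by rw [Set.pair_comm])
  have h2 := (h1.pow_left hv hvu b).congr (by rw [Set.pair_comm])
  exact (h2.pow_left hu (fun h => huv (hu.dvd_of_dvd_pow h)) a).congr' (by ring)

variable (k) in
/-- Three generic linear forms in characteristic two. -/
structure Trip (s t r : R) : Prop where
  ps : Prime s
  pt : Prime t
  pr : Prime r
  st : ¬ s ∣ t
  ts : ¬ t ∣ s
  sr : ¬ s ∣ r
  rs : ¬ r ∣ s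
  tr : ¬ t ∣ r
  rt : ¬ r ∣ t
  sum : s = t + r
  one : HasDim k (Ideal.span {s, t}) 1

variable [CharP R 2] {s t r : R}

lemma Trip.swap12 (h : Trip k s t r) : Trip k t s r :=
  ⟨h.pt, h.ps, h.pr, h.ts, h.st, h.tr, h.rt, h.sr, h.rs,
    by rw [h.sum, add_assoc, CharTwo.add_self_eq_zero, add_zero],
    h.one.congr (by rw [Set.pair_comm])⟩

lemma Trip.swap23 (h : Trip k s t r) : Trip k s r t :=
  ⟨h.ps, h.pr, h.pt, h.sr, h.rs, h.st, h.ts, h.rt, h.tr,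
    by rw [h.sum, add_comm],
    h.one.congr (le_antisymm
      (span2_le (mem2 1 0 (by ring)) (mem2 1 (-1) (by rw [h.sum]; ring)))
      (span2_le (mem2 1 0 (by ring)) (mem2 1 (-1) (by rw [h.sum]; ring))))⟩

lemma Trip.dim2 (h : Trip k s t r) (a b : ℕ) : HasDim k (Ideal.span {s ^ a, t ^ b}) (a * b) :=
  (h.one.pow_both h.ps h.pt h.st h.ts a b).congr' (by ring)

lemma Trip.powsum (h : Trip k s t r) (e : ℕ) : s ^ 2 ^ e = t ^ 2 ^ e + r ^ 2 ^ e := by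
  rw [h.sum, add_pow_char_pow]

lemma Trip.hd (h : Trip k s t r) (a b c : ℕ) :
    HasDim k (Ideal.span {s ^ a, t ^ b, r ^ c}) (DD k s t r a b c) :=
  ((h.dim2 a b).of_le (span2_le (mem3 1 0 0 (by ring)) (mem3 0 1 0 (by ring)))).1

lemma Trip.c1 (h : Trip k s t r) (e a b c : ℕ) (hb : b ≤ 2 ^ e) (hc : c ≤ 2 ^ e) :
    DD k s t r (2 ^ e + a) b c = b * c := by
  have h1 := h.swap12.swap23.dim2
  have h2 : HasDim k (Ideal.span {t ^ b, r ^ c}) (b * c) := h.swap12.swap23.dim2 b c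
  have : Ideal.span {s ^ (2 ^ e + a), t ^ b, r ^ c} = Ideal.span {t ^ b, r ^ c} := by
    apply le_antisymm
    · refine span3_le (mem2 (t ^ (2 ^ e - b) * s ^ a) (r ^ (2 ^ e - c) * s ^ a) ?_)
        (mem2 1 0 (by ring)) (mem2 0 1 (by ring))
      have e1 : t ^ (2 ^ e - b) * t ^ b = t ^ 2 ^ e := by rw [← pow_add]; congr 1; omega
      have e2 : r ^ (2 ^ e - c) * r ^ c = r ^ 2 ^ e := by rw [← pow_add]; congr 1; omega
      rw [pow_add, h.powsum]
      linear_combination s ^ a * e1 + s ^ a * e2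
    · exact span2_le (mem3 0 1 0 (by ring)) (mem3 0 0 1 (by ring))
  unfold DD
  rw [this, h2.2]

lemma Trip.c2 (h : Trip k s t r) (e a b c : ℕ) (hc : c ≤ 2 ^ e) :
    DD k s t r (2 ^ e + a) (2 ^ e + b) c = 2 ^ e * c + DD k s t r a b c := by
  have e2 : r ^ (2 ^ e - c) * r ^ c = r ^ 2 ^ e := by rw [← pow_add]; congr 1; omega
  have ht : t ^ 2 ^ e = s ^ 2 ^ e + r ^ 2 ^ e := h.swap12.powsum e
  have hs : s ^ 2 ^ e = t ^ 2 ^ e + r ^ 2 ^ e := h.powsum e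
  have hsr : HasDim k (Ideal.span {s ^ 2 ^ e, r ^ c}) (2 ^ e * c) := h.swap23.dim2 (2 ^ e) c
  rw [add_comm (2 ^ e * c)]
  refine (HasDim.colon (f := s ^ 2 ^ e) ?_ (h.hd a b c) (hsr.congr ?_)).2
  · intro x
    constructor
    · intro hx
      obtain ⟨α, β, γ, hx⟩ := Submodule.mem_span_triple.1 hx
      simp only [smul_eq_mul] at hx
      refine mem3 α β (γ * s ^ 2 ^ e + β * t ^ b * r ^ (2 ^ e - c)) ?_
      rw [← hx, pow_add, pow_add]
      linear_combination β * t ^ b * e2 - β * t ^ b * hs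
    · intro hx
      obtain ⟨α, β, γ, hx⟩ := Submodule.mem_span_triple.1 hx
      simp only [smul_eq_mul] at hx
      rw [pow_add, pow_add] at hx
      have h1 : r ^ c ∣ s ^ 2 ^ e * (x - α * s ^ a - β * t ^ b) :=
        ⟨γ + β * t ^ b * r ^ (2 ^ e - c), by
          linear_combination -hx + β * t ^ b * ht - β * t ^ b * e2⟩
      obtain ⟨δ, hδ⟩ := h.pr.pow_dvd_of_dvd_mul_left c
        (fun h' => h.rs (h.pr.dvd_of_dvd_pow h')) h1
      exact mem3 α β δ (by linear_combination -hδ)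
  · apply le_antisymm
    · exact span2_le (Ideal.mem_sup_right (Ideal.mem_span_singleton_self _))
          (Ideal.mem_sup_left (mem3 0 0 1 (by ring)))
    · refine sup_le (span3_le (mem2 (s ^ a) 0 (by ring))
        (mem2 (t ^ b) (t ^ b * r ^ (2 ^ e - c)) ?_) (mem2 0 1 (by ring)))
          (span1_le (mem2 1 0 (by ring)))
      rw [pow_add]
      linear_combination -t ^ b * ht + t ^ b * e2

lemma Trip.c3 (h : Trip k s t r) (e a b c : ℕ) (ha : a ≤ 2 ^ e) (hb : b ≤ 2 ^ e)
    (hc : c ≤ 2 ^ e) :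
    DD k s t r (2 ^ e + a) (2 ^ e + b) (2 ^ e + c) = 2 ^ e * 2 ^ e + a * b + b * c + c * a := by
  set P := 2 ^ e with hP
  let I : ℕ → Ideal R := fun j => Ideal.span {s ^ (P + a), t ^ (P + b), r ^ j}
  let J : ℕ → Ideal R := fun j => Submodule.comap (LinearMap.mulLeft R (r ^ j)) (I (j + 1))
  have hJ : ∀ j x, x ∈ J j ↔ r ^ j * x ∈ I (j + 1) := fun j x => Iff.rfl
  have hIJ : ∀ j, I (j + 1) ≤ J j := fun j x hx => (hJ j x).2 (Ideal.mul_mem_left _ _ hx)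
  have dJ : ∀ j, HasDim k (J j) (Module.finrank k (R ⧸ J j)) := fun j =>
    ((h.hd (P + a) (P + b) (j + 1)).of_le (hIJ j)).1
  set g := DD k s t r (P + a) (P + b) with hg
  set d : ℕ → ℕ := fun j => Module.finrank k (R ⧸ J j) with hd
  have step : ∀ j, g (j + 1) = d j + g j := by
    intro j
    refine (HasDim.colon (hJ j) (dJ j) ((h.hd (P + a) (P + b) j).congr ?_)).2
    apply le_antisymm
    · exact span3_le (Ideal.mem_sup_left (mem3 1 0 0 (by ring)))
        (Ideal.mem_sup_left (mem3 0 1 0 (by ring)))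
        (Ideal.mem_sup_right (Ideal.mem_span_singleton_self _))
    · exact sup_le (span3_le (mem3 1 0 0 (by ring)) (mem3 0 1 0 (by ring)) (mem3 0 0 r (by ring)))
        (span1_le (mem3 0 0 1 (by ring)))
  have anti : ∀ j, d (j + 1) ≤ d j := by
    intro j
    refine ((dJ j).of_le ?_).2
    intro x hx
    rw [hJ] at hx ⊢
    obtain ⟨α, β, γ, hx⟩ := Submodule.mem_span_triple.1 hx
    simp only [smul_eq_mul] at hx
    refine mem3 (α * r) (β * r) γ ?_
    linear_combination r * hx
  have hdP : d P ≤ a + b := by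
    have h1 : HasDim k (Ideal.span {s ^ (a + b), r ^ 1}) (a + b) :=
      (h.swap23.dim2 (a + b) 1).congr' (by ring)
    refine (h1.of_le ?_).2
    refine span2_le ?_ ?_
    · rw [hJ]
      obtain ⟨z, hz⟩ := sub_dvd_pow_sub_pow s t b
      have hst : s - t = r := by rw [h.sum]; ring
      rw [hst] at hz
      have hr : r ^ P = s ^ P + t ^ P := h.swap23.swap12.powsum e
      refine mem3 (t ^ b) (s ^ a) (s ^ a * z) ?_
      rw [pow_add, pow_add, pow_add, pow_succ]
      linear_combination -s ^ a * r ^ P * hz - s ^ a * t ^ b * hr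
    · rw [hJ]
      exact mem3 0 0 1 (by ring)
  have dle : ∀ j, d (P + j) ≤ a + b := by
    intro j
    induction j with
    | zero => exact hdP
    | succ j ih => exact (anti (P + j)).trans ih
  have gP : g P = P * P + a * b := by
    rw [hg, h.c2 e a b P le_rfl, DD_swap23, DD_swap12]
    have := (h.swap23.swap12.c1 e 0 a b ha hb)
    rw [add_zero] at this
    rw [this]
  have g2P : g (P + P) = (P + a) * (P + b) := by
    rw [hg, DD_swap23, DD_swap12]
    have h2 : P + P = 2 ^ (e + 1) := by rw [hP]; ring
    have := (h.swap23.swap12.c1 (e + 1) 0 (P + a) (P + b) (by omega) (by omega))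
    rw [add_zero] at this
    rw [h2, this]
  have up : ∀ i j, g (P + i + j) ≤ g (P + i) + j * (a + b) := by
    intro i j
    induction j with
    | zero => simp
    | succ j ih =>
      have := step (P + i + j)
      have := dle (i + j)
      rw [← add_assoc] at this ⊢
      have e1 : (j + 1) * (a + b) = j * (a + b) + (a + b) := by ring
      omega
  have u1 := up 0 c
  obtain ⟨c', hc'⟩ := Nat.exists_eq_add_of_le hc
  have u2 := up c c'
  rw [add_assoc, ← hc', g2P] at u2
  rw [add_zero, gP] at u1
  apply le_antisymm
  · linarith
  · zify at u2 hc' ⊢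
    rw [hc'] at u2 ⊢
    nlinarith
end colon
end A2HK
namespace A2HK
section lin
open TensorProduct
variable {k : Type*} [Field k]

/-- Dimension of the kernel of the `j`-th power. -/
noncomputable def G {V : Type*} [AddCommGroup V] [Module k V] (T : V →ₗ[k] V) (j : ℕ) : ℕ :=
  Module.finrank k (LinearMap.ker (T ^ j))

lemma pow_intertwine {V W : Type*} [AddCommGroup V] [Module k V] [AddCommGroup W] [Module k W]
    {T : V →ₗ[k] V} {S : W →ₗ[k] W} (φ : V → W) (h : ∀ v, φ (T v) = S (φ v)) (j : ℕ) (v : V) :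
    φ ((T ^ j) v) = (S ^ j) (φ v) := by
  induction j generalizing v with
  | zero => simp
  | succ j ih => rw [pow_succ, pow_succ, Module.End.mul_apply, Module.End.mul_apply, ih, h]

lemma G_conj {V W : Type*} [AddCommGroup V] [Module k V] [AddCommGroup W] [Module k W]
    {T : V →ₗ[k] V} {S : W →ₗ[k] W} (φ : V ≃ₗ[k] W) (h : ∀ v, φ (T v) = S (φ v)) (j : ℕ) :
    G T j = G S j := by
  unfold G
  have : LinearMap.ker (S ^ j) = (LinearMap.ker (T ^ j)).map φ.toLinearMap := by
    ext w
    rw [LinearMap.mem_ker, Submodule.mem_map]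
    constructor
    · intro hw
      refine ⟨φ.symm w, ?_, by simp⟩
      rw [LinearMap.mem_ker]
      apply φ.injective
      rw [pow_intertwine φ h]
      simpa using hw
    · rintro ⟨v, hv, rfl⟩
      rw [LinearMap.mem_ker] at hv
      change (S ^ j) (φ v) = 0
      rw [← pow_intertwine φ h, hv, map_zero]
  rw [this]
  exact (LinearEquiv.finrank_map_eq φ _).symm

lemma G_pi {V : Type*} [AddCommGroup V] [Module k V] {d : ℕ} {W : Fin d → Type*}
    [∀ i, AddCommGroup (W i)] [∀ i, Module k (W i)] [∀ i, Module.Finite k (W i)]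
    {T : V →ₗ[k] V} {S : ∀ i, W i →ₗ[k] W i} (φ : V ≃ₗ[k] (∀ i, W i))
    (h : ∀ v i, φ (T v) i = S i (φ v i)) (j : ℕ) :
    G T j = ∑ i, G (S i) j := by
  unfold G
  have hp : ∀ v i, φ ((T ^ j) v) i = (S i ^ j) (φ v i) := fun v i =>
    pow_intertwine (fun v => φ v i) (fun v => h v i) j v
  let ψ : LinearMap.ker (T ^ j) →ₗ[k] (∀ i, LinearMap.ker (S i ^ j)) :=
    LinearMap.pi fun i => LinearMap.codRestrict _
      (LinearMap.proj i ∘ₗ φ.toLinearMap ∘ₗ (LinearMap.ker (T ^ j)).subtype) (by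
        rintro ⟨v, hv⟩
        rw [LinearMap.mem_ker] at hv ⊢
        change (S i ^ j) (φ v i) = 0
        rw [← hp, hv]; simp)
  have hψ : ∀ v i, (ψ v i : W i) = φ v.1 i := fun v i => rfl
  have hb : Function.Bijective ψ := by
    constructor
    · intro v w hvw
      apply Subtype.ext
      apply φ.injective
      funext i
      rw [← hψ, ← hψ, hvw]
    · intro w
      refine ⟨⟨φ.symm fun i => (w i).1, ?_⟩, ?_⟩
      · rw [LinearMap.mem_ker]
        apply φ.injective
        funext i
        rw [hp]
        have := (w i).2
        rw [LinearMap.mem_ker] at this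
        simpa using this
      · funext i
        apply Subtype.ext
        rw [hψ]; simp
  rw [(LinearEquiv.ofBijective ψ hb).finrank_eq, Module.finrank_pi_fintype]

/-- The operator `S ⊗ 1 + 1 ⊗ T`. -/
noncomputable def ten {B V : Type*} [AddCommGroup B] [Module k B] [AddCommGroup V] [Module k V]
    (S : B →ₗ[k] B) (T : V →ₗ[k] V) : B ⊗[k] V →ₗ[k] B ⊗[k] V :=
  TensorProduct.map S LinearMap.id + TensorProduct.map LinearMap.id T

lemma ten_tmul {B V : Type*} [AddCommGroup B] [Module k B] [AddCommGroup V] [Module k V]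
    (S : B →ₗ[k] B) (T : V →ₗ[k] V) (b : B) (v : V) :
    ten S T (b ⊗ₜ v) = S b ⊗ₜ v + b ⊗ₜ T v := rfl

lemma G_ten_comm {B V : Type*} [AddCommGroup B] [Module k B] [AddCommGroup V] [Module k V]
    (S : B →ₗ[k] B) (T : V →ₗ[k] V) (j : ℕ) : G (ten S T) j = G (ten T S) j := by
  refine G_conj (TensorProduct.comm k B V) ?_ j
  intro v
  induction v using TensorProduct.induction_on with
  | zero => simp
  | tmul b v => simp [ten_tmul, add_comm]
  | add x y hx hy => simp only [map_add, hx, hy]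

lemma G_ten_pi {B V : Type*} [AddCommGroup B] [Module k B] [Module.Finite k B]
    [AddCommGroup V] [Module k V] {d : ℕ} {W : Fin d → Type*}
    [∀ i, AddCommGroup (W i)] [∀ i, Module k (W i)] [∀ i, Module.Finite k (W i)]
    (S : B →ₗ[k] B)
    {T : V →ₗ[k] V} {U : ∀ i, W i →ₗ[k] W i} (φ : V ≃ₗ[k] (∀ i, W i))
    (h : ∀ v i, φ (T v) i = U i (φ v i)) (j : ℕ) :
    G (ten S T) j = ∑ i, G (ten S (U i)) j := by
  refine G_pi ((TensorProduct.congr (LinearEquiv.refl k B) φ).trans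
    (TensorProduct.piRight k k B W)) ?_ j
  intro v i
  induction v using TensorProduct.induction_on with
  | zero => simp
  | tmul b v => simp [ten_tmul, h]
  | add x y hx hy => simp only [map_add, Pi.add_apply, hx, hy]

end lin
end A2HK
namespace A2HK
section alg
open TensorProduct MvPolynomial
variable {k : Type*} [Field k]

lemma ten_mul {A B : Type*} [CommRing A] [Algebra k A] [CommRing B] [Algebra k B] (a : A) (b : B)
    (v : A ⊗[k] B) : ten (LinearMap.mulLeft k a) (LinearMap.mulLeft k b) v =
      (a ⊗ₜ[k] 1 + 1 ⊗ₜ[k] b) * v := by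
  induction v using TensorProduct.induction_on with
  | zero => simp
  | tmul b v => simp [ten_tmul, add_mul]
  | add x y hx hy => simp only [map_add, hx, hy, mul_add]

lemma tpow1 {A B : Type*} [CommRing A] [Algebra k A] [CommRing B] [Algebra k B] {a : A} {n : ℕ}
    (h : a ^ n = 0) : (a ⊗ₜ[k] (1 : B)) ^ n = 0 := by
  rw [Algebra.TensorProduct.tmul_pow, h, TensorProduct.zero_tmul]

lemma tpow2 {A B : Type*} [CommRing A] [Algebra k A] [CommRing B] [Algebra k B] {a : B} {n : ℕ}
    (h : a ^ n = 0) : ((1 : A) ⊗ₜ[k] a) ^ n = 0 := by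
  rw [Algebra.TensorProduct.tmul_pow, h, TensorProduct.tmul_zero]

/-- The ideal generated by pure powers. -/
noncomputable def PI (k : Type*) [Field k] {σ : Type*} (n : σ → ℕ) : Ideal (MvPolynomial σ k) :=
  Ideal.span (Set.range fun i => (X i : MvPolynomial σ k) ^ n i)

/-- Truncated polynomial algebra. -/
abbrev PQ (k : Type*) [Field k] {σ : Type*} (n : σ → ℕ) : Type _ := MvPolynomial σ k ⧸ PI k n

/-- The class of a polynomial. -/
noncomputable abbrev cl {σ : Type*} (n : σ → ℕ) (f : MvPolynomial σ k) : PQ k n :=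
  Ideal.Quotient.mk (PI k n) f

lemma cl_X_pow {σ : Type*} (n : σ → ℕ) (i : σ) : (cl n (X i : MvPolynomial σ k)) ^ n i = 0 := by
  rw [← map_pow, Ideal.Quotient.eq_zero_iff_mem]
  exact Ideal.subset_span ⟨i, rfl⟩

/-- Universal property. -/
noncomputable def plift {σ : Type*} (n : σ → ℕ) {C : Type*} [CommRing C] [Algebra k C] (c : σ → C)
    (hc : ∀ i, c i ^ n i = 0) : PQ k n →ₐ[k] C :=
  Ideal.Quotient.liftₐ _ (MvPolynomial.aeval c) (by
    intro a ha
    have : PI k n ≤ RingHom.ker (MvPolynomial.aeval c : MvPolynomial σ k →ₐ[k] C) := by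
      unfold PI
      rw [Ideal.span_le]
      rintro _ ⟨i, rfl⟩
      simp [hc]
    exact this ha)

lemma plift_cl {σ : Type*} (n : σ → ℕ) {C : Type*} [CommRing C] [Algebra k C] (c : σ → C)
    (hc : ∀ i, c i ^ n i = 0) (f : MvPolynomial σ k) :
    plift n c hc (cl n f) = MvPolynomial.aeval c f := rfl

lemma plift_X {σ : Type*} (n : σ → ℕ) {C : Type*} [CommRing C] [Algebra k C] (c : σ → C)
    (hc : ∀ i, c i ^ n i = 0) (i : σ) : plift n c hc (cl n (X i : MvPolynomial σ k)) = c i := by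
  rw [plift_cl, aeval_X]

lemma pq_ext {σ : Type*} {n : σ → ℕ} {C : Type*} [Semiring C] [Algebra k C]
    {f g : PQ k n →ₐ[k] C} (h : ∀ i, f (cl n (X i)) = g (cl n (X i))) : f = g := by
  apply Ideal.Quotient.algHom_ext
  apply MvPolynomial.algHom_ext
  exact h

lemma cl_rename {σ υ : Type*} (p : υ → ℕ) (f : σ → υ) (g : MvPolynomial σ k) :
    cl p (rename f g) = aeval (fun i => cl p (X (f i))) g := by
  have : (Ideal.Quotient.mkₐ k (PI k p)).comp (rename f) = aeval (fun i => cl p (X (f i))) := by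
    apply MvPolynomial.algHom_ext
    intro i
    rw [AlgHom.comp_apply, rename_X, aeval_X]; rfl
  rw [← this]; rfl

/-- Tensor products of truncated polynomial algebras. -/
lemma pten {σ τ υ : Type*} (q : σ ⊕ τ ≃ υ) (n : σ → ℕ) (m : τ → ℕ) (p : υ → ℕ)
    (h1 : ∀ i, p (q (.inl i)) = n i) (h2 : ∀ i, p (q (.inr i)) = m i) :
    ∃ φ : (PQ k n ⊗[k] PQ k m) ≃ₐ[k] PQ k p,
      (∀ f, φ (cl n f ⊗ₜ 1) = cl p (rename (fun i => q (.inl i)) f)) ∧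
      (∀ f, φ (1 ⊗ₜ cl m f) = cl p (rename (fun i => q (.inr i)) f)) := by
  let a : PQ k n →ₐ[k] PQ k p := plift n (fun i => cl p (X (q (.inl i))))
    (fun i => by rw [← h1]; exact cl_X_pow p _)
  let b : PQ k m →ₐ[k] PQ k p := plift m (fun i => cl p (X (q (.inr i))))
    (fun i => by rw [← h2]; exact cl_X_pow p _)
  let c0 : σ ⊕ τ → PQ k n ⊗[k] PQ k m :=
    Sum.elim (fun i => cl n (X i) ⊗ₜ[k] 1) (fun i => 1 ⊗ₜ[k] cl m (X i))
  have hc0 : ∀ u, c0 (q.symm u) ^ p u = 0 := by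
    intro u
    obtain ⟨v, rfl⟩ := q.surjective u
    rw [q.symm_apply_apply]
    rcases v with i | i
    · rw [h1]; exact tpow1 (cl_X_pow n i)
    · rw [h2]; exact tpow2 (cl_X_pow m i)
  let c : PQ k p →ₐ[k] PQ k n ⊗[k] PQ k m := plift p (fun u => c0 (q.symm u)) hc0
  let f := Algebra.TensorProduct.productMap a b
  have ha : ∀ i, a (cl n (X i)) = cl p (X (q (.inl i))) := fun i => plift_X _ _ _ _
  have hb : ∀ i, b (cl m (X i)) = cl p (X (q (.inr i))) := fun i => plift_X _ _ _ _
  have hc : ∀ v, c (cl p (X (q v))) =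
c0 v := fun v => by
    change plift p (fun u => c0 (q.symm u)) hc0 _ = _
    rw [plift_X, q.symm_apply_apply]
  have hf1 : ∀ x, f (x ⊗ₜ 1) = a x := fun x => by simp [f]
  have hf2 : ∀ x, f (1 ⊗ₜ x) = b x := fun x => by simp [f]
  refine ⟨AlgEquiv.ofAlgHom f c ?_ ?_, ?_, ?_⟩
  · apply pq_ext
    intro u
    obtain ⟨v, rfl⟩ := q.surjective u
    rw [AlgHom.comp_apply, hc]
    rcases v with i | i
    · exact (hf1 _).trans (ha i)
    · exact (hf2 _).trans (hb i)
  · apply Algebra.TensorProduct.ext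
    · apply pq_ext
      intro i
      change c (f (cl n (X i) ⊗ₜ[k] 1)) = cl n (X i) ⊗ₜ[k] 1
      rw [hf1, ha, hc]; rfl
    · apply pq_ext
      intro i
      change c (f (1 ⊗ₜ[k] cl m (X i))) = 1 ⊗ₜ[k] cl m (X i)
      rw [hf2, hb, hc]; rfl
  · intro g
    refine (hf1 (cl n g)).trans ?_
    rw [cl_rename]
    exact plift_cl _ _ _ g
  · intro g
    refine (hf2 (cl m g)).trans ?_
    rw [cl_rename]
    exact plift_cl _ _ _ g

/-- Multiplication operator. -/
noncomputable abbrev ml {σ : Type*} (n : σ → ℕ) (f : MvPolynomial σ k) : PQ k n →ₗ[k] PQ k n :=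
  LinearMap.mulLeft k (cl n f)

lemma G_pten {σ τ υ : Type*} (q : σ ⊕ τ ≃ υ) (n : σ → ℕ) (m : τ → ℕ) (p : υ → ℕ)
    (h1 : ∀ i, p (q (.inl i)) = n i) (h2 : ∀ i, p (q (.inr i)) = m i)
    (f : MvPolynomial σ k) (g : MvPolynomial τ k) (j : ℕ) :
    G (ten (ml n f) (ml m g)) j =
      G (ml p (rename (fun i => q (.inl i)) f + rename (fun i => q (.inr i)) g)) j := by
  obtain ⟨φ, hφ1, hφ2⟩ := pten (k := k) q n m p h1 h2
  refine G_conj φ.toLinearEquiv ?_ j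
  intro v
  change φ _ = _ * φ v
  rw [ten_mul, map_mul, map_add, hφ1, hφ2, ← map_add]

/-- Kernel vs. cokernel. -/
lemma G_quot {R : Type*} [CommRing R] [Algebra k R] (I : Ideal R) [Module.Finite k (R ⧸ I)]
    (a : R) (j : ℕ) : G (LinearMap.mulLeft k (Ideal.Quotient.mk I a)) j =
      Module.finrank k (R ⧸ (I ⊔ Ideal.span {a ^ j})) := by
  unfold G
  rw [LinearMap.pow_mulLeft, ← map_pow]
  set T := LinearMap.mulLeft k (Ideal.Quotient.mk I (a ^ j)) with hT
  set ψ := (Ideal.Quotient.factorₐ k (le_sup_left : I ≤ I ⊔ Ideal.span {a ^ j})).toLinearMap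
  have hs : Function.Surjective ψ := Ideal.Quotient.factor_surjective le_sup_left
  have hr : LinearMap.range T = LinearMap.ker ψ := by
    ext y
    obtain ⟨x, rfl⟩ := Ideal.Quotient.mk_surjective y
    rw [LinearMap.mem_ker]
    change _ ↔ Ideal.Quotient.mk (I ⊔ Ideal.span {a ^ j}) x = 0
    rw [Ideal.Quotient.eq_zero_iff_mem, sup_comm, Ideal.mem_span_singleton_sup]
    constructor
    · rintro ⟨z, hz⟩
      obtain ⟨w, rfl⟩ := Ideal.Quotient.mk_surjective z
      rw [hT, LinearMap.mulLeft_apply, ← map_mul, Ideal.Quotient.eq] at hz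
      exact ⟨w, -(a ^ j * w - x), I.neg_mem hz, by ring⟩
    · rintro ⟨w, b, hb, hw⟩
      refine ⟨Ideal.Quotient.mk I w, ?_⟩
      rw [hT, LinearMap.mulLeft_apply, ← map_mul, Ideal.Quotient.eq]
      have : a ^ j * w - x = -b := by rw [← hw]; ring
      rw [this]; exact I.neg_mem hb
  have e1 := LinearMap.finrank_range_add_finrank_ker ψ
  have e2 := LinearMap.finrank_range_add_finrank_ker T
  rw [← hr, LinearMap.range_eq_top.2 hs, finrank_top] at e1
  omega

end alg
end A2HK
namespace A2HK
section jor
open TensorProduct MvPolynomial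
variable {k : Type*} [Field k]

instance pq_finite {σ : Type*} [Finite σ] (n : σ → ℕ) : Module.Finite k (PQ k n) := by
  have h1 : (Algebra.adjoin k (Set.range fun i => cl n (X i : MvPolynomial σ k))) = ⊤ := by
    have h := congrArg (Subalgebra.map (Ideal.Quotient.mkₐ k (PI k n)))
      (MvPolynomial.adjoin_range_X (R := k) (σ := σ))
    rw [AlgHom.map_adjoin, ← Set.range_comp, Algebra.map_top,
      (AlgHom.range_eq_top _).2 (Ideal.Quotient.mkₐ_surjective k _)] at h
    exact h
  have h2 := fg_adjoin_of_finite (R := k)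
    (Set.finite_range fun i => cl n (X i : MvPolynomial σ k)) (by
      rintro _ ⟨i, rfl⟩
      exact ⟨Polynomial.X ^ n i, Polynomial.monic_X_pow _, by
        rw [Polynomial.eval₂_X_pow]; exact cl_X_pow n i⟩)
  rw [h1] at h2
  exact ⟨h2⟩

/-- One-variable truncated polynomial algebra. -/
lemma one_block (σ : Type) [Unique σ] (n : ℕ) : ∃ φ : (Polynomial k ⧸ Ideal.span {(Polynomial.X : Polynomial k) ^ n}) ≃ₗ[k]
    PQ k (fun _ : σ => n), ∀ v, φ (Ideal.Quotient.mk _ Polynomial.X * v) =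
      ml (fun _ : σ => n) (X (default : σ)) (φ v) := by
  have h : PI k (fun _ : σ => n) =
      (Ideal.span {(Polynomial.X : Polynomial k) ^ n}).map
        ((uniqueAlgEquiv k σ).symm : Polynomial k →+* _) := by
    rw [Ideal.map_span, Set.image_singleton]
    unfold PI
    congr 1
    rw [Set.range_unique]
    simp
  let φ := Ideal.quotientEquivAlg _ (PI k (fun _ : σ => n)) (uniqueAlgEquiv k σ).symm h
  refine ⟨φ.toLinearEquiv, ?_⟩
  intro v
  change φ _ = _ * φ v
  rw [map_mul]
  congr 1
  change Ideal.Quotient.mk _ ((uniqueAlgEquiv k σ).symm Polynomial.X) = _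
  simp

lemma jordan {V : Type*} [AddCommGroup V] [Module k V] [Module.Finite k V] (T : V →ₗ[k] V) (q : ℕ)
    (hT : T ^ q = 0) : ∃ (d : ℕ) (n : Fin d → ℕ), (∀ i, n i ≤ q) ∧
      ∃ φ : V ≃ₗ[k] (∀ i, PQ k (fun _ : Unit => n i)),
        ∀ v i, φ (T v) i = ml (fun _ : Unit => n i) (X ()) (φ v i) := by
  have tor : Module.IsTorsion' (Module.AEval' T) (Submonoid.powers (Polynomial.X : Polynomial k)) := by
    intro x
    refine ⟨⟨Polynomial.X ^ q, q, rfl⟩, ?_⟩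
    obtain ⟨v, rfl⟩ := (Module.AEval'.of T).surjective x
    change (Polynomial.X ^ q : Polynomial k) • (Module.AEval'.of T v) = _
    rw [Module.AEval'.X_pow_smul_of, hT]
    simp
  have fin : Module.Finite (Polynomial k) (Module.AEval' T) := inferInstance
  obtain ⟨d, n, ⟨ψ⟩⟩ := Module.torsion_by_prime_power_decomposition (Polynomial.irreducible_X) tor
  let ψ1 := ψ.trans (DirectSum.linearEquivFunOnFintype (Polynomial k) (Fin d) _)
  have hψ : ∀ v i, ψ1 (Module.AEval'.of T (T v)) i =
      (Polynomial.X : Polynomial k) • (ψ1 (Module.AEval'.of T v) i) := by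
    intro v i
    rw [← Module.AEval'.X_smul_of, map_smul]; rfl
  choose β hβ using fun i => one_block (k := k) Unit (n i)
  let φ : V ≃ₗ[k] (∀ i, PQ k (fun _ : Unit => n i)) :=
    ((Module.AEval'.of T).trans (ψ1.restrictScalars k)).trans (LinearEquiv.piCongrRight β)
  have hφ : ∀ v i, φ v i = β i (ψ1 (Module.AEval'.of T v) i) := fun v i => rfl
  have hφT : ∀ v i, φ (T v) i = ml (fun _ : Unit => n i) (X ()) (φ v i) := by
    intro v i
    rw [hφ, hψ, hφ, ← hβ]
    rfl
  refine ⟨d, n, ?_, φ, hφT⟩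
  intro i
  have h1 : (Polynomial.X ^ q : Polynomial k) •
      (ψ1.symm (Pi.single i (Submodule.Quotient.mk 1))) = 0 := by
    obtain ⟨v, hv⟩ := (Module.AEval'.of T).surjective
      (ψ1.symm (Pi.single i (Submodule.Quotient.mk 1)))
    rw [← hv, Module.AEval'.X_pow_smul_of, hT]
    simp
  have h2 := congrArg (fun x => ψ1 x i) h1
  simp only [map_smul, LinearEquiv.apply_symm_apply, Pi.smul_apply, Pi.single_eq_same, map_zero,
    Pi.zero_apply] at h2
  rw [← Submodule.Quotient.mk_smul, Submodule.Quotient.mk_eq_zero, smul_eq_mul, mul_one,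
    Submodule.mem_span_singleton] at h2
  obtain ⟨c, hc⟩ := h2
  have h3 : (Polynomial.X : Polynomial k) ^ n i ∣ Polynomial.X ^ q :=
    ⟨c, by rw [← hc, smul_eq_mul, mul_comm]⟩
  exact (pow_dvd_pow_iff Polynomial.X_ne_zero Polynomial.not_isUnit_X).1 h3

lemma G_block (σ : Type) [Unique σ] (n j : ℕ) : G (ml (k := k) (fun _ : σ => n) (X (default : σ))) j = min n j := by
  obtain ⟨φ, hφ⟩ := one_block (k := k) σ n
  have : Module.Finite k (Polynomial k ⧸ Ideal.span {(Polynomial.X : Polynomial k) ^ n}) :=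
    Module.Finite.equiv φ.symm
  rw [← G_conj (T := LinearMap.mulLeft k (Ideal.Quotient.mk _ Polynomial.X)) φ hφ, G_quot]
  have : Ideal.span {(Polynomial.X : Polynomial k) ^ n} ⊔ Ideal.span {Polynomial.X ^ j} =
      Ideal.span {(Polynomial.X : Polynomial k) ^ (min n j)} := by
    apply le_antisymm
    · apply sup_le <;> rw [Ideal.span_singleton_le_span_singleton] <;> apply pow_dvd_pow <;> simp
    · rcases le_total n j with h | h
      · rw [min_eq_left h]; exact le_sup_left
      · rw [min_eq_right h]; exact le_sup_right
  rw [this, finrank_quotient_span_eq_natDegree]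
  simp
end jor
end A2HK
namespace A2HK
section trip
set_option linter.unusedSectionVars false
open TensorProduct MvPolynomial
variable {k : Type*} [Field k]

lemma DD_map {R : Type*} [CommRing R] [Algebra k R] (σ : R ≃ₐ[k] R) (s t r : R) (a b c : ℕ) :
    DD k s t r a b c = DD k (σ s) (σ t) (σ r) a b c := by
  unfold DD
  refine (Ideal.quotientEquivAlg _ _ σ ?_).toLinearEquiv.finrank_eq
  rw [Ideal.map_span]
  congr 1
  simp [Set.image_insert_eq]

lemma one_dim : HasDim k (Ideal.span {(X 0 : MvPolynomial (Fin 2) k), X 1}) 1 := by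
  have h1 : Ideal.span {(X 0 : MvPolynomial (Fin 2) k), X 1} =
      RingHom.ker (aeval (fun _ => (0 : k)) : MvPolynomial (Fin 2) k →ₐ[k] k) := by
    have h2 : ({(X 0 : MvPolynomial (Fin 2) k), X 1} : Set _) = X '' (Set.univ) := by
      ext x
      simp [Fin.exists_fin_two, eq_comm]
    ext f
    rw [h2, mem_ideal_span_X_image, RingHom.mem_ker]
    have h3 : (aeval (fun _ => (0 : k))) f = coeff 0 f := by
      change aeval (0 : Fin 2 → k) f = _
      rw [aeval_zero]; rfl
    rw [h3]
    constructor
    · intro h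
      by_contra h4
      obtain ⟨i, -, hi⟩ := h 0 (mem_support_iff.2 h4)
      simp at hi
    · intro h m hm
      by_contra! h4
      have : m = 0 := by ext i; exact h4 i trivial
      rw [this, mem_support_iff] at hm
      exact hm h
  rw [h1]
  let φ := Ideal.quotientKerAlgEquivOfSurjective
    (f := (aeval (fun _ => (0 : k)) : MvPolynomial (Fin 2) k →ₐ[k] k))
    (fun x => ⟨C x, by simp⟩)
  refine ⟨Module.Finite.equiv φ.toLinearEquiv.symm, ?_⟩
  rw [φ.toLinearEquiv.finrank_eq, Module.finrank_self]

variable [CharP k 2]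

variable (k) in
/-- The shear automorphism. -/
noncomputable def shear : MvPolynomial (Fin 2) k ≃ₐ[k] MvPolynomial (Fin 2) k :=
  AlgEquiv.ofAlgHom (aeval ![X 0, X 0 + X 1]) (aeval ![X 0, X 0 + X 1])
    (by
      apply MvPolynomial.algHom_ext
      intro i
      fin_cases i
      · simp
      · simp [← add_assoc, CharTwo.add_self_eq_zero])
    (by
      apply MvPolynomial.algHom_ext
      intro i
      fin_cases i
      · simp
      · simp [← add_assoc, CharTwo.add_self_eq_zero])

lemma shear0 : shear k (X 0) = X 0 := by
  change aeval ![X 0, X 0 + X 1] (X 0) = _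
  simp
lemma shear1 : shear k (X 1) = X 0 + X 1 := by
  change aeval ![X 0, X 0 + X 1] (X 1) = _
  simp

lemma trip : Trip k (X 0 : MvPolynomial (Fin 2) k) (X 1) (X 0 + X 1) := by
  have n01 : ¬ (X 0 : MvPolynomial (Fin 2) k) ∣ X 1 := by rw [X_dvd_X]; decide
  have n10 : ¬ (X 1 : MvPolynomial (Fin 2) k) ∣ X 0 := by rw [X_dvd_X]; decide
  have sr : ¬ (X 0 : MvPolynomial (Fin 2) k) ∣ X 0 + X 1 := fun h =>
    n01 ((dvd_add_right dvd_rfl).1 h)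
  have tr : ¬ (X 1 : MvPolynomial (Fin 2) k) ∣ X 0 + X 1 := fun h =>
    n10 ((dvd_add_left dvd_rfl).1 h)
  have pr : Prime (X 0 + X 1 : MvPolynomial (Fin 2) k) := by
    rw [← shear1, MulEquiv.prime_iff]; exact X_prime
  exact { ps := X_prime
          pt := X_prime
          pr := pr
          st := n01
          ts := n10
          sr := sr
          rs := fun h => sr ((pr.dvd_prime_iff_associated X_prime).1 h).symm.dvd
          tr := tr
          rt := fun h => tr ((pr.dvd_prime_iff_associated X_prime).1 h).symm.dvd
          sum := by
            rw [add_comm (X 0), ← add_assoc, CharTwo.add_self_eq_zero, zero_add]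
          one := one_dim }

variable (k) in
/-- Han's function for the standard triple. -/
noncomputable def D (a b c : ℕ) : ℕ := DD k (X 0 : MvPolynomial (Fin 2) k) (X 1) (X 0 + X 1) a b c

lemma D12 (a b c : ℕ) : D k a b c = D k b a c := by
  unfold D
  rw [DD_map (renameEquiv k (Equiv.swap 0 1)), DD_swap12]
  simp [add_comm]

lemma D23 (a b c : ℕ) : D k a b c = D k a c b := by
  unfold D
  rw [DD_map (shear k), DD_swap23, map_add, shear0, shear1, ← add_assoc,
    CharTwo.add_self_eq_zero, zero_add]

lemma E_D (e n j : ℕ) (hn : n ≤ 2 ^ e) (hj : j ≤ 2 ^ e) :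
    2 * ∑ l ∈ Finset.range (2 ^ e), (D k n l j : ℤ) + D k n (2 ^ e) j =
      2 ^ e * n * j + ∑ b ∈ Finset.range e, 2 ^ b * eps b n * eps b j := by
  have D0 : ∀ b c, D k 0 b c = 0 := by
    intro b c
    have h := HasDim.top (k := k) (R := MvPolynomial (Fin 2) k)
    refine (h.congr ?_).2
    symm
    rw [Ideal.eq_top_iff_one]
    exact mem3 1 0 0 (by simp)
  refine E_formula (fun a b c => (D k a b c : ℤ)) ?_ ?_ ?_ ?_ ?_ ?_ ?_ e n j hn hj
  · intro a b c; simp only [D12 a b c]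
  · intro a b c; simp only [D23 a b c]
  · intro b c; simp only [D0, Nat.cast_zero]
  · have := (trip (k := k)).c1 0 0 1 1 le_rfl le_rfl
    exact_mod_cast this
  · intro e a b c hb hc
    exact_mod_cast (trip (k := k)).c1 e a b c hb hc
  · intro e a b c ha hb hc
    exact_mod_cast (trip (k := k)).c2 e a b c hc
  · intro e a b c ha hb hc
    exact_mod_cast (trip (k := k)).c3 e a b c ha hb hc

/-- Two points. -/
def twoPt : Unit ⊕ Unit ≃ Fin 2 where
  toFun := Sum.elim (fun _ => 0) (fun _ => 1)
  invFun := ![Sum.inl (), Sum.inr ()]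
  left_inv := by rintro (⟨⟩ | ⟨⟩) <;> rfl
  right_inv := by intro i; fin_cases i <;> rfl

lemma G_blocks (l n j : ℕ) : G (ten (ml (k := k) (fun _ : Unit => l) (X ()))
    (ml (k := k) (fun _ : Unit => n) (X ()))) j = D k l n j := by
  rw [G_pten twoPt (fun _ => l) (fun _ => n) ![l, n] (fun _ => rfl) (fun _ => rfl)]
  rw [G_quot, rename_X, rename_X]
  unfold D DD
  have : PI k ![l, n] ⊔ Ideal.span {(X (twoPt (Sum.inl ())) + X (twoPt (Sum.inr ()))) ^ j} =
      Ideal.span {(X 0 : MvPolynomial (Fin 2) k) ^ l, X 1 ^ n, (X 0 + X 1) ^ j} := by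
    unfold PI
    rw [← Ideal.span_union]
    congr 1
    ext x
    simp [Fin.exists_fin_two, twoPt, eq_comm]
    tauto
  rw [this]
end trip
end A2HK
namespace A2HK
section tb
set_option linter.unusedSectionVars false
open TensorProduct MvPolynomial Finset
variable {k : Type*} [Field k]

lemma G_B (q j : ℕ) (hj : j ≤ q) :
    (G (ml (k := k) (fun _ : Fin 2 => q) (X 0 * X 1)) j : ℤ) = j * (2 * q - j) := by
  rw [G_quot]
  set R := MvPolynomial (Fin 2) k
  have n01 : ¬ (X 0 : R) ∣ X 1 := by rw [X_dvd_X]; decide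
  have n10 : ¬ (X 1 : R) ∣ X 0 := by rw [X_dvd_X]; decide
  have p0 : Prime (X 0 : R) := X_prime
  have p1 : Prime (X 1 : R) := X_prime
  have hI : PI k (fun _ : Fin 2 => q) ⊔ Ideal.span {((X 0 : R) * X 1) ^ j} =
      Ideal.span {(X 0 : R) ^ q, X 1 ^ q, (X 0 * X 1) ^ j} := by
    unfold PI
    rw [← Ideal.span_union]
    congr 1
    ext x
    simp [Fin.exists_fin_two, eq_comm]
    tauto
  rw [hI]
  have d2 : ∀ a b, HasDim k (Ideal.span {(X 0 : R) ^ a, X 1 ^ b}) (a * b) := fun a b =>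
    ((one_dim (k := k)).pow_both p0 p1 n01 n10 a b).congr' (by ring)
  obtain ⟨c, rfl⟩ := Nat.exists_eq_add_of_le hj
  have : HasDim k (Ideal.span {(X 0 : R) ^ (j + c), X 1 ^ (j + c), (X 0 * X 1) ^ j})
      (c * j + j * (j + c)) := by
    refine HasDim.colon (f := (X 0 : R) ^ j) ?_ (d2 c j) ((d2 j (j + c)).congr ?_)
    · intro x
      constructor
      · intro hx
        obtain ⟨α, β, rfl⟩ := Ideal.mem_span_pair.1 hx
        exact mem3 α 0 β (by ring)
      · intro hx
        obtain ⟨α, β, γ, hx⟩ := Submodule.mem_span_triple.1 hx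
        simp only [smul_eq_mul] at hx
        have h1 : (X 0 : R) ^ j ∣ (X 1) ^ (j + c) * β :=
          ⟨x - α * X 0 ^ c - γ * X 1 ^ j, by linear_combination hx⟩
        obtain ⟨δ, rfl⟩ := p0.pow_dvd_of_dvd_mul_left j
          (fun h => n01 (p0.dvd_of_dvd_pow h)) h1
        refine mem2 α (γ + X 1 ^ c * δ) ?_
        apply mul_left_cancel₀ (pow_ne_zero j p0.ne_zero)
        linear_combination hx
    · apply le_antisymm
      · exact span2_le (Ideal.mem_sup_right (Ideal.mem_span_singleton_self _))
          (Ideal.mem_sup_left (mem3 0 1 0 (by ring)))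
      · refine sup_le (span3_le (mem2 (X 0 ^ c) 0 (by ring)) (mem2 0 1 (by ring))
          (mem2 (X 1 ^ j) 0 (by ring))) (span1_le (mem2 1 0 (by ring)))
  rw [this.2]
  push_cast
  ring

lemma X01_pow (q : ℕ) : ml (k := k) (fun _ : Fin 2 => q) (X 0 * X 1) ^ q = 0 := by
  have h : cl (k := k) (fun _ : Fin 2 => q) (X 0 * X 1) ^ q = 0 := by
    rw [← map_pow, mul_pow, map_mul, map_pow, cl_X_pow (fun _ : Fin 2 => q) 0, zero_mul]
  rw [LinearMap.pow_mulLeft, h, LinearMap.mulLeft_zero_eq_zero]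

lemma abel_B (q : ℕ) (φ : ℕ → ℤ) (h0 : φ 0 = 0) (m : ℕ) :
    ∑ l ∈ range m, (2 * (q : ℤ) - 2 * l - 1) * (φ (l + 1) - φ l) =
      (2 * q - 2 * m + 1) * φ m + 2 * ∑ l ∈ range m, φ l := by
  induction m with
  | zero => simp [h0]
  | succ m ih => rw [sum_range_succ, ih, sum_range_succ]; push_cast; ring

lemma abel_G {d : ℕ} (n : Fin d → ℕ) (q : ℕ) (hn : ∀ i, n i ≤ q) (g : ℕ → ℕ)
    (hg : ∀ j, g j = ∑ i, min (n i) j) (φ : ℕ → ℤ) (h0 : φ 0 = 0) :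
    ∑ i, φ (n i) = ∑ l ∈ range q, ((g (l + 1) : ℤ) - g l) * (φ (l + 1) - φ l) := by
  rw [sum_congr rfl (fun i _ => abel q (n i) (hn i) φ h0), sum_comm]
  refine sum_congr rfl fun l _ => ?_
  rw [← sum_mul, hg, hg]
  push_cast
  rw [sum_sub_distrib]

lemma G_jordan {V : Type*} [AddCommGroup V] [Module k V] {T : V →ₗ[k] V}
    {d : ℕ} {n : Fin d → ℕ} (φ : V ≃ₗ[k] (∀ i, PQ k (fun _ : Unit => n i)))
    (h : ∀ v i, φ (T v) i = ml (fun _ : Unit => n i) (X ()) (φ v i)) (j : ℕ) :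
    G T j = ∑ i, min (n i) j := by
  rw [G_pi φ h]
  exact sum_congr rfl fun i _ => G_block Unit _ _

variable [CharP k 2]

theorem TB {V : Type*} [AddCommGroup V] [Module k V] [Module.Finite k V] (T : V →ₗ[k] V) (e : ℕ)
    (hT : T ^ 2 ^ e = 0) (j : ℕ) (hj : j ≤ 2 ^ e) :
    (G (ten (ml (k := k) (fun _ : Fin 2 => 2 ^ e) (X 0 * X 1)) T) j : ℤ) =
      2 ^ e * G T (2 ^ e) * j +
        ∑ b ∈ range e, 2 ^ b * wt e b (fun i => (G T i : ℤ)) * eps b j := by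
  obtain ⟨d, n, hn, φ, hφ⟩ := jordan T _ hT
  obtain ⟨d', l, hl, ψ, hψ⟩ := jordan _ _ (X01_pow (k := k) (2 ^ e))
  have g1 := G_jordan φ hφ
  have g2 := G_jordan ψ hψ
  have key : ∀ i, (∑ c, (D k (n i) (l c) j : ℤ)) =
      2 ^ e * n i * j + ∑ b ∈ range e, 2 ^ b * eps b (n i) * eps b j := by
    intro i
    have h0 : (fun m => (D k (n i) m j : ℤ)) 0 = 0 := by
      have h := HasDim.top (k := k) (R := MvPolynomial (Fin 2) k)
      have : D k (n i) 0 j = 0 := by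
        refine (h.congr ?_).2
        symm
        rw [Ideal.eq_top_iff_one]
        exact mem3 0 1 0 (by simp)
      simp only [this, Nat.cast_zero]
    rw [← E_D (k := k) e (n i) j (hn i) hj,
      abel_G l _ hl _ g2 (fun m => (D k (n i) m j : ℤ)) h0]
    have h1 := abel_B (2 ^ e) (fun m => (D k (n i) m j : ℤ)) h0 (2 ^ e)
    have h2 : (∑ l ∈ range (2 ^ e), (2 * ((2 ^ e : ℕ) : ℤ) - 2 * l - 1) *
        ((D k (n i) (l + 1) j : ℤ) - D k (n i) l j)) =
        2 * ∑ l ∈ range (2 ^ e), (D k (n i) l j : ℤ) + D k (n i) (2 ^ e) j := by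
      rw [h1]; ring
    rw [← h2]
    refine sum_congr rfl fun m hm => ?_
    rw [mem_range] at hm
    rw [G_B _ _ hm, G_B _ _ hm.le]
    push_cast
    ring
  have e1 : (G (ten (ml (k := k) (fun _ : Fin 2 => 2 ^ e) (X 0 * X 1)) T) j : ℤ) =
      ∑ i, ∑ c, (D k (n i) (l c) j : ℤ) := by
    rw [G_ten_pi _ φ hφ]
    push_cast
    refine sum_congr rfl fun i _ => ?_
    rw [G_ten_comm, G_ten_pi _ ψ hψ]
    push_cast
    refine sum_congr rfl fun c _ => ?_
    rw [G_blocks]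
  rw [e1, sum_congr rfl (fun i _ => key i), sum_add_distrib, ← sum_mul, ← mul_sum, sum_comm]
  congr 1
  · rw [g1]
    push_cast
    congr 2
    refine sum_congr rfl fun i _ => ?_
    rw [min_eq_left]
    exact_mod_cast hn i
  · refine sum_congr rfl fun b _ => ?_
    rw [← sum_mul, ← mul_sum, abel_G n _ hn _ g1 (eps b) (eps_zero b)]
    congr 2
    unfold wt
    refine sum_congr rfl fun m _ => ?_
    rw [eps_succ]; ring
end tb
end A2HK
namespace A2HK
section base
open Finset

lemma rho_shift (b i : ℕ) : rho b (i + 2 ^ b) = - rho b i := by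
  unfold rho
  rw [add_comm, Nat.testBit_two_pow_add_eq]
  cases i.testBit b <;> simp

/-- Partial sums of the square wave sampled at thirds. -/
def S3 (b n : ℕ) : ℤ := ∑ l ∈ range n, rho b (l / 3)

lemma S3_small (b n : ℕ) (hn : n ≤ 3 * 2 ^ b) : S3 b n = n := by
  unfold S3
  rw [sum_congr rfl (g := fun _ => (1 : ℤ))]
  · simp
  · intro l hl
    rw [mem_range] at hl
    exact rho_lt b _ (by omega)

lemma S3_shift (b n : ℕ) : S3 b (3 * 2 ^ b + n) = 3 * 2 ^ b - S3 b n := by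
  have h := S3_small b (3 * 2 ^ b) le_rfl
  unfold S3 at *
  rw [sum_range_add, h, sub_eq_add_neg, ← sum_neg_distrib]
  push_cast
  congr 1
  refine sum_congr rfl fun l _ => ?_
  rw [← rho_shift]
  congr 1
  omega

lemma S3_per (b n m : ℕ) : S3 b (6 * 2 ^ b * m + n) = S3 b n := by
  induction m with
  | zero => simp
  | succ m ih =>
    have : 6 * 2 ^ b * (m + 1) + n = 3 * 2 ^ b + (3 * 2 ^ b + (6 * 2 ^ b * m + n)) := by ring
    rw [this, S3_shift, S3_shift, ih]; ring

lemma S3_val (b a : ℕ) : S3 b (2 ^ (b + 1 + a)) = 2 ^ (b + 1) ∧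
    S3 b (2 ^ (b + 1 + (a + 1))) = 2 ^ (b + 1) := by
  induction a with
  | zero =>
    constructor
    · rw [S3_small]
      · push_cast; ring
      · rw [add_zero, pow_succ]; omega
    · have : 2 ^ (b + 1 + (0 + 1)) = 3 * 2 ^ b + 2 ^ b := by ring
      rw [this, S3_shift, S3_small b _ (by omega)]
      push_cast; ring
  | succ a ih =>
    refine ⟨ih.2, ?_⟩
    have : 2 ^ (b + 1 + (a + 1 + 1)) = 6 * 2 ^ b * 2 ^ a + 2 ^ (b + 1 + a) := by ring
    rw [this, S3_per, ih.1]

lemma third_count (q b n : ℕ) :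
    ∑ i ∈ range n, rho b i * (((min q (3 * (i + 1)) : ℕ) : ℤ) - (min q (3 * i) : ℕ)) =
      S3 b (min q (3 * n)) := by
  induction n with
  | zero => simp [S3]
  | succ n ih =>
    rw [sum_range_succ, ih]
    have h : ∀ x, 3 * n ≤ x → x ≤ 3 * (n + 1) → S3 b x = S3 b (3 * n) + rho b n * (x - 3 * n) := by
      intro x h1 h2
      obtain ⟨y, rfl⟩ := Nat.exists_eq_add_of_le h1
      unfold S3
      rw [sum_range_add, sum_congr (s₁ := range y) rfl (g := fun _ => rho b n)]
      · simp; ring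
      · intro l hl
        rw [mem_range] at hl
        congr 1; omega
    rcases le_total q (3 * n) with h1 | h1
    · rw [min_eq_left h1, min_eq_left (by omega)]; ring
    · rw [min_eq_right h1, h (min q (3 * (n + 1))) (by omega) (by omega)]
      push_cast; ring

lemma wt_even (e b : ℕ) (hb : b < e) :
    wt e b (fun i => ((min (2 ^ e) (3 * i) : ℕ) : ℤ)) = 2 ^ (b + 1) := by
  unfold wt
  rw [third_count, min_eq_left (by omega)]
  obtain ⟨a, rfl⟩ := Nat.exists_eq_add_of_le (show b + 1 ≤ e from hb)
  exact (S3_val b a).1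

lemma half_count (h b n : ℕ) :
    ∑ i ∈ range n, rho b i * (((min (i + 1) h : ℕ) : ℤ) - (min i h : ℕ)) = eps b (min n h) := by
  induction n with
  | zero => simp [eps]
  | succ n ih =>
    rw [sum_range_succ, ih]
    rcases le_or_gt h n with h1 | h1
    · rw [min_eq_right h1, min_eq_right (by omega)]; ring
    · rw [min_eq_left h1.le, min_eq_left (by omega), eps_succ]; push_cast; ring

lemma wt_odd (e b : ℕ) (hb : b < e + 1) :
    wt (e + 1) b (fun i => 2 * 2 ^ (e + 1) * ((min i (2 ^ e) : ℕ) : ℤ)) =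
      if b = e then (2 ^ (e + 1)) ^ 2 else 0 := by
  have h1 : wt (e + 1) b (fun i => 2 * 2 ^ (e + 1) * ((min i (2 ^ e) : ℕ) : ℤ)) =
      2 * 2 ^ (e + 1) * eps b (2 ^ e) := by
    have := half_count (2 ^ e) b (2 ^ (e + 1))
    rw [min_eq_right (Nat.pow_le_pow_right (by norm_num) (by omega))] at this
    rw [← this, mul_sum]
    unfold wt
    refine sum_congr rfl fun i _ => ?_
    ring
  rw [h1]
  split_ifs with h
  · subst h
    rw [eps_small _ _ le_rfl]; push_cast; ring
  · have : eps b (2 ^ e) = 0 := rho_sum e b (by omega)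
    rw [this]; ring
end base
end A2HK
namespace A2HK
section fin
set_option linter.unusedSectionVars false
open Finset
variable (k : Type*) [Field k]

/-- The kernel function of the singularity. -/
noncomputable def gg (d e j : ℕ) : ℕ := G (ml (k := k) (fun _ : Fin (d + 1) => 2 ^ e) (A2poly k d)) j

lemma HK_gg (d e : ℕ) : HKfun k (d + 1) 2 e (A2poly k d) = gg k d e 1 := by
  unfold gg HKfun
  rw [G_quot, pow_one]
  unfold PI
  rw [← Ideal.span_union]

/-- Splitting off two variables. -/
def spl (d : ℕ) : Fin 2 ⊕ Fin (d + 1) ≃ Fin (d + 2 + 1) :=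
  finSumFinEquiv.trans (finCongr (by omega))

lemma A2_step (d : ℕ) : A2poly k (d + 2) = rename (fun i => spl d (.inl i)) (X 0 * X 1) +
    rename (fun i => spl d (.inr i)) (A2poly k d) := by
  have h : (d + 2) / 2 = d / 2 + 1 := by omega
  unfold A2poly
  have h2 : ∀ i, ((spl d (.inr i)) : Fin (d + 2 + 1)) = ⟨i.1 + 2, by omega⟩ := by
    intro i; ext; simp [spl]
  have h1 : ∀ i, ((spl d (.inl i)) : Fin (d + 2 + 1)) = ⟨i.1, by omega⟩ := by
    intro i; ext; simp [spl]
  have hodd : Odd (d + 2) ↔ Odd d := by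
    rw [Nat.odd_add]; simp
  rw [← Fintype.sum_equiv (finCongr h.symm) (fun i : Fin (d / 2 + 1) =>
    (X (⟨2 * i, by omega⟩ : Fin (d + 2 + 1)) * X (⟨2 * i + 1, by omega⟩ : Fin (d + 2 + 1)) :
      MvPolynomial (Fin (d + 2 + 1)) k)) _ (fun i => by simp)]
  rw [Fin.sum_univ_succ]
  simp only [map_add, map_mul, map_sum, rename_X, map_pow, h1, h2, hodd]
  have hB : (if Odd d then (X (⟨d + 2 - 1, by omega⟩ : Fin (d + 2 + 1)) : MvPolynomial _ k) ^ 2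
      else 0) = rename (fun i : Fin (d + 1) => (⟨i.1 + 2, by omega⟩ : Fin (d + 2 + 1)))
        (if Odd d then (X (⟨d - 1, by omega⟩ : Fin (d + 1)) : MvPolynomial _ k) ^ 2 else 0) := by
    by_cases hd : Odd d
    · have : d - 1 + 2 = d + 2 - 1 := by have := hd.pos; omega
      simp only [hd, if_true, map_pow, rename_X, this]
    · simp only [hd, if_false, map_zero]
  rw [hB]
  simp only [add_assoc (G := MvPolynomial (Fin (d + 2 + 1)) k)]
  rfl

variable [CharP k 2]

lemma A2_nil (d e : ℕ) : ml (k := k) (fun _ : Fin (d + 1) => 2 ^ e) (A2poly k d) ^ 2 ^ e = 0 := by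
  have hX : ∀ i : Fin (d + 1), (X i : MvPolynomial (Fin (d + 1)) k) ∈
      (PI k (fun _ : Fin (d + 1) => 2 ^ e)).comap (iterateFrobenius _ 2 e) := by
    intro i
    rw [Ideal.mem_comap, iterateFrobenius_def]
    exact Ideal.subset_span ⟨i, rfl⟩
  have h : A2poly k d ∈ (PI k (fun _ : Fin (d + 1) => 2 ^ e)).comap (iterateFrobenius _ 2 e) := by
    unfold A2poly
    refine Ideal.add_mem _ (Ideal.add_mem _ ?_ ?_) ?_
    · exact Ideal.sum_mem _ fun i _ => Ideal.mul_mem_left _ _ (hX _)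
    · split_ifs
      · exact Ideal.pow_mem_of_mem _ (hX _) 2 (by norm_num)
      · exact Ideal.zero_mem _
    · exact Ideal.pow_mem_of_mem _ (hX _) 3 (by norm_num)
  rw [Ideal.mem_comap, iterateFrobenius_def] at h
  have h' : cl (k := k) (fun _ : Fin (d + 1) => 2 ^ e) (A2poly k d) ^ 2 ^ e = 0 := by
    rw [← map_pow, Ideal.Quotient.eq_zero_iff_mem]
    exact h
  rw [LinearMap.pow_mulLeft, h', LinearMap.mulLeft_zero_eq_zero]

lemma gg_step (d e j : ℕ) (hj : j ≤ 2 ^ e) :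
    (gg k (d + 2) e j : ℤ) = 2 ^ e * gg k d e (2 ^ e) * j +
      ∑ b ∈ range e, 2 ^ b * wt e b (fun i => (gg k d e i : ℤ)) * eps b j := by
  have := TB (k := k) _ e (A2_nil k d e) j hj
  rw [G_pten (spl d) (fun _ => 2 ^ e) (fun _ => 2 ^ e) (fun _ => 2 ^ e)
    (fun _ => rfl) (fun _ => rfl), ← A2_step] at this
  exact this

lemma gg_wt (d e b m : ℕ) (hb : b < e) : wt e b (fun i => (gg k (d + 2 * m) e i : ℤ)) =
    (2 ^ b * 2 ^ e) ^ m * wt e b (fun i => (gg k d e i : ℤ)) := by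
  induction m with
  | zero => simp
  | succ m ih =>
    change wt e b (fun i => (gg k (d + 2 * m + 2) e i : ℤ)) = _
    rw [wt_step e b hb (fun i => (gg k (d + 2 * m) e i : ℤ)) _ _
      (fun j hj => gg_step k (d + 2 * m) e j hj), ih]
    ring

lemma gg_top (d e m : ℕ) : (gg k (d + 2 * m) e (2 ^ e) : ℤ) =
    (2 ^ e * 2 ^ e) ^ m * gg k d e (2 ^ e) := by
  induction m with
  | zero => simp
  | succ m ih =>
    have := gg_step k (d + 2 * m) e (2 ^ e) le_rfl
    rw [sum_eq_zero, ih] at this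
    · change (gg k (d + 2 * m + 2) e (2 ^ e) : ℤ) = _
      rw [this]; push_cast; ring
    · intro b hb
      have : eps b (2 ^ e) = 0 := rho_sum e b (mem_range.1 hb)
      rw [this, mul_zero]

lemma gg_one (d e m : ℕ) : (gg k (d + 2 * (m + 1)) e 1 : ℤ) =
    2 ^ e * ((2 ^ e * 2 ^ e) ^ m * gg k d e (2 ^ e)) +
      ∑ b ∈ range e, 2 ^ b * ((2 ^ b * 2 ^ e) ^ m * wt e b (fun i => (gg k d e i : ℤ))) := by
  have := gg_step k (d + 2 * m) e 1 Nat.one_le_two_pow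
  change (gg k (d + 2 * m + 2) e 1 : ℤ) = _
  rw [this, gg_top, Nat.cast_one, mul_one]
  congr 1
  refine sum_congr rfl fun b hb => ?_
  rw [gg_wt k d e b m (mem_range.1 hb), eps_one, mul_one]

lemma G_pow {V : Type*} [AddCommGroup V] [Module k V] (T : V →ₗ[k] V) (a j : ℕ) :
    G (T ^ a) j = G T (a * j) := by
  unfold G; rw [pow_mul]

lemma gg_zero (e j : ℕ) : gg k 0 e j = min (2 ^ e) (3 * j) := by
  unfold gg
  have h : A2poly k 0 = X 0 ^ 3 := by simp [A2poly]
  have h2 : ml (k := k) (fun _ : Fin (0 + 1) => 2 ^ e) (A2poly k 0) =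
      ml (k := k) (fun _ : Fin (0 + 1) => 2 ^ e) (X 0) ^ 3 := by
    rw [h, LinearMap.pow_mulLeft, ← map_pow]
  rw [h2, G_pow]
  exact G_block (Fin 1) _ _

lemma gg_odd (e j : ℕ) : gg k 1 (e + 1) j = 2 * 2 ^ (e + 1) * min j (2 ^ e) := by
  unfold gg
  have h : A2poly k 1 = X 0 ^ 2 + X 1 ^ 3 := by simp [A2poly]
  rw [G_quot, h]
  change Module.finrank k (MvPolynomial (Fin 2) k ⧸ (PI k (fun _ : Fin 2 => 2 ^ (e + 1)) ⊔
    Ideal.span {((X 0 : MvPolynomial (Fin 2) k) ^ 2 + X 1 ^ 3) ^ j})) = _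
  set R := MvPolynomial (Fin 2) k
  set P := 2 ^ e with hP
  have hq : 2 ^ (e + 1) = 2 * P := by rw [hP]; ring
  rw [hq]
  have n01 : ¬ (X 0 : R) ∣ X 1 := by rw [X_dvd_X]; decide
  have n10 : ¬ (X 1 : R) ∣ X 0 := by rw [X_dvd_X]; decide
  have p0 : Prime (X 0 : R) := X_prime
  have p1 : Prime (X 1 : R) := X_prime
  have hI : PI k (fun _ : Fin 2 => 2 * P) ⊔ Ideal.span {((X 0 : R) ^ 2 + X 1 ^ 3) ^ j} =
      Ideal.span {(X 0 : R) ^ (2 * P), X 1 ^ (2 * P), (X 0 ^ 2 + X 1 ^ 3) ^ j} := by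
    unfold PI
    rw [← Ideal.span_union]
    congr 1
    ext x
    simp [Fin.exists_fin_two, eq_comm]
    tauto
  rw [hI]
  have d2 : ∀ a b, HasDim k (Ideal.span {(X 0 : R) ^ a, X 1 ^ b}) (a * b) := fun a b =>
    ((one_dim (k := k)).pow_both p0 p1 n01 n10 a b).congr' (by ring)
  have fr : ((X 0 : R) ^ 2 + X 1 ^ 3) ^ P = X 0 ^ (2 * P) + X 1 ^ (2 * P) * X 1 ^ P := by
    rw [hP, add_pow_char_pow, ← pow_mul, ← pow_mul, ← pow_add]
    congr 2; ring
  rcases le_total j P with hj | hj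
  · obtain ⟨c, hc⟩ := Nat.exists_eq_add_of_le hj
    rw [min_eq_left hj]
    set p : R := X 0 ^ 2 + X 1 ^ 3 with hp
    have hpd : ¬ (X 1 : R) ∣ p ^ j := by
      intro h
      have h1 := p1.dvd_of_dvd_pow h
      rw [hp, dvd_add_left (dvd_pow_self _ (by norm_num))] at h1
      exact n10 (p1.dvd_of_dvd_pow h1)
    have h1 : HasDim k (Ideal.span {(X 1 : R), p ^ j}) (2 * j) := by
      refine ((d2 (2 * j) 1).congr' (by ring)).congr ?_
      obtain ⟨z, hz⟩ := sub_dvd_pow_sub_pow p ((X 0) ^ 2) j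
      have hz' : p ^ j - X 0 ^ (2 * j) = X 1 ^ 3 * z := by
        rw [pow_mul, hz, hp]; ring
      exact le_antisymm
        (span2_le (mem2 (-(X 1 ^ 2 * z)) 1 (by linear_combination hz')) (mem2 1 0 (by ring)))
        (span2_le (mem2 0 1 (by ring)) (mem2 1 (X 1 ^ 2 * z) (by linear_combination -hz')))
    have h2 := h1.pow_left p1 hpd (2 * P)
    refine ((h2.congr ?_).congr' (by ring)).2
    apply le_antisymm
    · exact span2_le (mem3 0 1 0 (by ring)) (mem3 0 0 1 (by ring))
    · refine span3_le (mem2 (- X 1 ^ P) (p ^ c) ?_) (mem2 1 0 (by ring)) (mem2 0 1 (by ring))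
      rw [hc, pow_add, ← hc] at fr
      linear_combination fr
  · obtain ⟨c, rfl⟩ := Nat.exists_eq_add_of_le hj
    rw [min_eq_right hj]
    refine ((((d2 (2 * P) (2 * P))).congr ?_).congr' (by ring)).2
    apply le_antisymm
    · exact span2_le (mem3 1 0 0 (by ring)) (mem3 0 1 0 (by ring))
    · refine span3_le (mem2 1 0 (by ring)) (mem2 0 1 (by ring))
        (mem2 ((X 0 ^ 2 + X 1 ^ 3) ^ c) (X 1 ^ P * (X 0 ^ 2 + X 1 ^ 3) ^ c) ?_)
      rw [pow_add, fr]; ring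

lemma HK_even (m e : ℕ) : (HKfun k (2 * (m + 1) + 1) 2 e (A2poly k (2 * (m + 1))) : ℤ) =
    (2 ^ e) ^ (2 * (m + 1)) + 2 * (2 ^ e) ^ m * ∑ b ∈ range e, (2 ^ (m + 2)) ^ b := by
  rw [HK_gg]
  have := gg_one k 0 e m
  rw [zero_add] at this
  rw [this, gg_zero, min_eq_left (by omega), mul_sum]
  congr 1
  · push_cast; ring
  · refine sum_congr rfl fun b hb => ?_
    have h : (fun i => (gg k 0 e i : ℤ)) = (fun i => ((min (2 ^ e) (3 * i) : ℕ) : ℤ)) := by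
      funext i; rw [gg_zero]
    rw [h, wt_even e b (mem_range.1 hb), ← pow_mul 2 (m + 2) b, mul_comm (m + 2) b, pow_mul]
    ring

lemma HK_odd (m e : ℕ) :
    (HKfun k (2 * m + 1 + 1) 2 (e + 1) (A2poly k (2 * m + 1)) : ℤ) * 2 ^ m =
    (2 ^ (e + 1)) ^ (2 * m + 1) * (2 ^ m + 1) := by
  rw [HK_gg]
  cases m with
  | zero =>
    rw [show 2 * 0 + 1 = 1 from rfl, gg_odd, min_eq_left Nat.one_le_two_pow]
    push_cast; ring
  | succ m =>
    have h1 := gg_one k 1 (e + 1) m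
    have h : (fun i => (gg k 1 (e + 1) i : ℤ)) =
        (fun i => 2 * 2 ^ (e + 1) * ((min i (2 ^ e) : ℕ) : ℤ)) := by
      funext i; rw [gg_odd]; push_cast; ring
    rw [h, gg_odd, min_eq_right (Nat.pow_le_pow_right (by norm_num) (by omega))] at h1
    rw [add_comm (2 * (m + 1)) 1, h1, sum_eq_single e]
    · rw [wt_odd e e (by omega), if_pos rfl]
      have h4 : (4 : ℤ) ^ m = 2 ^ (m * 2) := by rw [mul_comm, pow_mul]; norm_num
      push_cast; ring_nf; rw [h4]; ring
    · intro b hb hbe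
      rw [wt_odd e b (mem_range.1 hb), if_neg hbe]; ring
    · intro h; simp at h
end fin
end A2HK

/-- The Hilbert–Kunz multiplicity of the `A₂` singularity in characteristic 2 exists and
equals `(2^{m+1} + 1)/(2^{m+1} − 1)` if `d = 2m` is even,
and `(2^m + 1)/2^m` if `d = 2m + 1` is odd. -/
theorem eHK_A2_char_two (k : Type*) [Field k] [CharP k 2] (d : ℕ) (hd : 1 ≤ d) :
    ∃ L : ℝ,
      Filter.Tendsto
        (fun e : ℕ => (HKfun k (d + 1) 2 e (A2poly k d) : ℝ) / 2 ^ (d * e))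
        Filter.atTop (nhds L) ∧
      (∀ m : ℕ, d = 2 * m → L = (2 ^ (m + 1) + 1) / (2 ^ (m + 1) - 1)) ∧
      (∀ m : ℕ, d = 2 * m + 1 → L = (2 ^ m + 1) / 2 ^ m) := by
  obtain ⟨n, hn | hn⟩ := Nat.even_or_odd' d
  · obtain ⟨m, rfl⟩ : ∃ m, n = m + 1 := ⟨n - 1, by omega⟩
    subst hn
    refine ⟨(2 ^ (m + 1 + 1) + 1) / (2 ^ (m + 1 + 1) - 1), ?_, ?_, ?_⟩
    · have hr1 : (1 : ℝ) < 2 ^ (m + 1 + 1) := one_lt_pow₀ (by norm_num) (by omega)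
      have key : ∀ e : ℕ, (HKfun k (2 * (m + 1) + 1) 2 e (A2poly k (2 * (m + 1))) : ℝ) /
          2 ^ (2 * (m + 1) * e) = 1 + 2 * (1 - ((2 ^ (m + 1 + 1) : ℝ)⁻¹) ^ e) /
            (2 ^ (m + 1 + 1) - 1) := by
        intro e
        have h : (HKfun k (2 * (m + 1) + 1) 2 e (A2poly k (2 * (m + 1))) : ℝ) =
            (2 ^ e) ^ (2 * (m + 1)) + 2 * (2 ^ e) ^ m *
              ∑ b ∈ Finset.range e, (2 ^ (m + 1 + 1)) ^ b := by
          exact_mod_cast A2HK.HK_even k m e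
        rw [h, geom_sum_eq hr1.ne', inv_pow, mul_comm (2 * (m + 1)) e, pow_mul 2 e,
          ← pow_mul 2 (m + 1 + 1) e, mul_comm (m + 1 + 1) e, pow_mul 2 e]
        have hP : (2 : ℝ) ^ e ≠ 0 := by positivity
        have hr : (2 : ℝ) ^ (m + 1 + 1) - 1 ≠ 0 := by linarith
        generalize (2 : ℝ) ^ (m + 1 + 1) - 1 = r at hr
        generalize (2 : ℝ) ^ e = P at hP
        field_simp
        ring
      simp only [key]
      have ht := tendsto_pow_atTop_nhds_zero_of_lt_one (r := (2 ^ (m + 1 + 1) : ℝ)⁻¹)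
        (by positivity) (inv_lt_one_of_one_lt₀ hr1)
      have := (((ht.const_sub 1).const_mul 2).div_const ((2 : ℝ) ^ (m + 1 + 1) - 1)).const_add 1
      convert this using 2
      have hr : (2 : ℝ) ^ (m + 1 + 1) - 1 ≠ 0 := by linarith
      field_simp
      ring
    · intro m' h
      obtain rfl : m' = m + 1 := by omega
      rfl
    · intro m' h; omega
  · subst hn
    refine ⟨(2 ^ n + 1) / 2 ^ n, ?_, ?_, ?_⟩
    · rw [← Filter.tendsto_add_atTop_iff_nat 1]
      refine tendsto_const_nhds.congr fun e => ?_
      have h : (HKfun k (2 * n + 1 + 1) 2 (e + 1) (A2poly k (2 * n + 1)) : ℝ) * 2 ^ n =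
          (2 ^ (e + 1)) ^ (2 * n + 1) * (2 ^ n + 1) := by
        exact_mod_cast A2HK.HK_odd k n e
      rw [div_eq_div_iff (by positivity) (by positivity), h, mul_comm (2 * n + 1), pow_mul]
      ring
    · intro m' h; omega
    · intro m' h
      obtain rfl : m' = n := by omega
      rfl
end

section
/- Let k be a field of characteristic 3, let d ≥ 1 and e ≥ 1. Then dim_k ( k[x_0,…,x_d] / (x_0^{3^e},…,x_d^{3^e}, x_0² + x_1² + ⋯ + x_{d−1}² + x_d³) ) = 3^{d·(e−1)+1} · dim_k ( k[y_0,…,y_{d−1}] / (y_0³,…,y_{d−1}³, y_0² + y_1² + ⋯ + y_{d−1}²) ). That is, the Hilbert–Kunz function of the A_2 singularity in characteristic 3 satisfies HK_e(S_{3,d}) = 3·3^{(e−1)d}·HK_1(R_{3,d−1}). -/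
open MvPolynomial

theorem a2_equiv_bij (d m : ℕ) [NeZero m] : Function.Bijective
    (fun x : (Σ _ : (Fin d → Fin m), (Fin d →₀ ℕ)) =>
      (m • x.2 + Finsupp.equivFunOnFinite.symm (fun i => (x.1 i : ℕ)) : Fin d →₀ ℕ)) := by
  have hm : 0 < m := Nat.pos_of_ne_zero (NeZero.ne m)
  constructor
  · rintro ⟨a, n⟩ ⟨b, l⟩ h
    have h' : ∀ i, m * n i + a i = m * l i + b i := fun i => by
      simpa using DFunLike.congr_fun h i
    have h1 : a = b := by
      funext i
      have := congrArg (· % m) (h' i)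
      simp only [Nat.mul_add_mod, Nat.mod_eq_of_lt (a i).2, Nat.mod_eq_of_lt (b i).2] at this
      exact Fin.ext this
    subst h1
    have h2 : n = l := by
      ext i
      have := h' i
      exact Nat.eq_of_mul_eq_mul_left hm (by omega)
    subst h2
    rfl
  · intro s
    refine ⟨⟨fun i => ⟨s i % m, Nat.mod_lt _ hm⟩,
      Finsupp.equivFunOnFinite.symm (fun i => s i / m)⟩, ?_⟩
    ext i
    simp [Nat.div_add_mod]

noncomputable def a2Phi (k : Type*) [Field k] (d m : ℕ) [NeZero m] :
    ((Fin d → Fin m) → MvPolynomial (Fin d) k) ≃ₗ[k] MvPolynomial (Fin d) k :=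
  (Pi.basis (fun _ : Fin d → Fin m => basisMonomials (Fin d) k)).equiv
    (basisMonomials (Fin d) k) (Equiv.ofBijective _ (a2_equiv_bij d m))

theorem a2Phi_apply (k : Type*) [Field k] (d m : ℕ) [NeZero m]
    (P : (Fin d → Fin m) → MvPolynomial (Fin d) k) :
    a2Phi k d m P = ∑ a, monomial (Finsupp.equivFunOnFinite.symm (fun i => (a i : ℕ))) 1 *
      expand m (P a) := by
  classical
  let L : ((Fin d → Fin m) → MvPolynomial (Fin d) k) →ₗ[k] MvPolynomial (Fin d) k :=
    ∑ a, (LinearMap.mulLeft k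
      (monomial (Finsupp.equivFunOnFinite.symm (fun i => (a i : ℕ))) 1)) ∘ₗ
      (expand m).toLinearMap ∘ₗ LinearMap.proj a
  have : (a2Phi k d m).toLinearMap = L := by
    apply (Pi.basis (fun _ : Fin d → Fin m => basisMonomials (Fin d) k)).ext
    rintro ⟨a, n⟩
    rw [LinearEquiv.coe_coe, a2Phi, Module.Basis.equiv_apply]
    simp only [L, LinearMap.sum_apply, LinearMap.comp_apply, LinearMap.proj_apply,
      Pi.basis_apply, AlgHom.toLinearMap_apply, LinearMap.mulLeft_apply]
    rw [Finset.sum_eq_single a]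
    · simp [monomial_mul, add_comm]
    · intro b _ hb
      simp [Pi.single_eq_of_ne hb]
    · simp
  have h := LinearMap.congr_fun this P
  simpa [L] using h

theorem a2_finrank_expand (k : Type*) [Field k] (d m : ℕ) [NeZero m]
    (G : Set (MvPolynomial (Fin d) k)) :
    Module.finrank k (MvPolynomial (Fin d) k ⧸ Ideal.span ((expand m : MvPolynomial (Fin d) k →ₐ[k] _) '' G)) =
      m ^ d * Module.finrank k (MvPolynomial (Fin d) k ⧸ Ideal.span G) := by
  classical
  set J := Ideal.span ((expand m : MvPolynomial (Fin d) k →ₐ[k] _) '' G)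
  let K : Submodule k (MvPolynomial (Fin d) k) := (Ideal.span G).restrictScalars k
  let J' : Submodule k (MvPolynomial (Fin d) k) := J.restrictScalars k
  have key : ∀ P, P ∈ Submodule.pi Set.univ (fun _ : Fin d → Fin m => K) →
      a2Phi k d m P ∈ J := by
    intro P hP
    rw [a2Phi_apply]
    refine Ideal.sum_mem _ fun a _ => Ideal.mul_mem_left _ _ ?_
    have h1 : P a ∈ Ideal.span G := hP a (Set.mem_univ a)
    have := Ideal.mem_map_of_mem (expand m : MvPolynomial (Fin d) k →ₐ[k] _) h1
    rwa [Ideal.map_span] at this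
  have key2 : ∀ x ∈ J, ∃ P ∈ Submodule.pi Set.univ (fun _ : Fin d → Fin m => K),
      a2Phi k d m P = x := by
    intro x hx
    refine Submodule.span_induction (p := fun x _ => ∃ P ∈ Submodule.pi Set.univ (fun _ : Fin d → Fin m => K),
      a2Phi k d m P = x) ?_ ?_ ?_ ?_ hx
    · rintro _ ⟨g, hg, rfl⟩
      obtain ⟨Q, hQ⟩ := (a2Phi k d m).surjective 1
      refine ⟨fun a => Q a * g, fun a _ => Ideal.mul_mem_left _ _ (Ideal.subset_span hg), ?_⟩
      rw [a2Phi_apply] at hQ ⊢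
      simp only [map_mul, ← mul_assoc]
      rw [← Finset.sum_mul, hQ, one_mul]
    · exact ⟨0, Submodule.zero_mem _, map_zero _⟩
    · rintro x y _ _ ⟨P, hP, rfl⟩ ⟨Q, hQ, rfl⟩
      exact ⟨P + Q, Submodule.add_mem _ hP hQ, map_add _ _ _⟩
    · rintro h x _ ⟨P, hP, rfl⟩
      -- expand `h * Φ P` termwise
      have : ∀ a, ∃ Q : (Fin d → Fin m) → MvPolynomial (Fin d) k, a2Phi k d m Q =
          h * monomial (Finsupp.equivFunOnFinite.symm (fun i => ((a : Fin d → Fin m) i : ℕ))) 1 :=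
        fun a => (a2Phi k d m).surjective _
      choose Q hQ using this
      refine ⟨∑ a, fun b => Q a b * P a, Submodule.sum_mem _ fun a _ => fun b _ =>
        Ideal.mul_mem_left _ _ (hP a (Set.mem_univ a)), ?_⟩
      rw [map_sum, a2Phi_apply k d m P, smul_eq_mul, Finset.mul_sum]
      refine Finset.sum_congr rfl fun a _ => ?_
      rw [← mul_assoc, ← hQ a, a2Phi_apply, a2Phi_apply, Finset.sum_mul]
      simp [mul_assoc]
  have hmap : (Submodule.pi Set.univ (fun _ : Fin d → Fin m => K)).map
      (a2Phi k d m).toLinearMap = J' := by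
    ext x
    constructor
    · rintro ⟨P, hP, rfl⟩
      exact key P hP
    · intro hx
      exact key2 x hx
  have e1 := Submodule.Quotient.equiv _ _ (a2Phi k d m) hmap
  have e2 := Submodule.quotientPi (R := k) (fun _ : Fin d → Fin m => K)
  have h3 := (e1.symm.trans e2).finrank_eq
  have h4 : Module.finrank k (MvPolynomial (Fin d) k ⧸ J) =
    Module.finrank k (MvPolynomial (Fin d) k ⧸ J') := rfl
  have h5 : Module.finrank k (MvPolynomial (Fin d) k ⧸ Ideal.span G) =
    Module.finrank k (MvPolynomial (Fin d) k ⧸ K) := rfl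
  rw [h4, h5, h3]
  have h6 : Module.finrank k ((Fin d → Fin m) → MvPolynomial (Fin d) k ⧸ K) =
      Fintype.card (Fin d → Fin m) * Module.finrank k (MvPolynomial (Fin d) k ⧸ K) := by
    rw [← (Finsupp.linearEquivFunOnFinite k (MvPolynomial (Fin d) k ⧸ K)
      (Fin d → Fin m)).finrank_eq, Module.finrank, rank_finsupp]
    simp [Module.finrank]
  rw [h6]
  simp

theorem a2_step1 (k : Type*) [Field k] (d q r : ℕ) (hq : q = 3 * r)
    (g : MvPolynomial (Fin d) k) :
    Module.finrank k (MvPolynomial (Fin (d + 1)) k ⧸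
      Ideal.span (Set.range (fun i : Fin (d + 1) => (X i : MvPolynomial (Fin (d + 1)) k) ^ q) ∪
        {rename Fin.castSucc g + X (Fin.last d) ^ 3})) =
    3 * Module.finrank k (MvPolynomial (Fin d) k ⧸
      Ideal.span (Set.range (fun i : Fin d => (X i : MvPolynomial (Fin d) k) ^ q) ∪ {g ^ r})) := by
  set I := Ideal.span (Set.range (fun i : Fin (d + 1) => (X i : MvPolynomial (Fin (d + 1)) k) ^ q) ∪
        {rename Fin.castSucc g + X (Fin.last d) ^ 3}) with hI
  set J := Ideal.span (Set.range (fun i : Fin d => (X i : MvPolynomial (Fin d) k) ^ q) ∪ {g ^ r}) with hJ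
  let B := MvPolynomial (Fin d) k ⧸ J
  let gb : B := Ideal.Quotient.mk J g
  let F : Polynomial B := Polynomial.X ^ 3 + Polynomial.C gb
  have hF : F.Monic := Polynomial.monic_X_pow_add_C _ (by norm_num)
  have hgb : gb ^ r = 0 := by
    rw [← map_pow, Ideal.Quotient.eq_zero_iff_mem]
    exact Ideal.subset_span (Or.inr rfl)
  have hroot : AdjoinRoot.root F ^ 3 = - AdjoinRoot.of F gb := by
    have := AdjoinRoot.eval₂_root F
    simp only [F, Polynomial.eval₂_add, Polynomial.eval₂_pow, Polynomial.eval₂_X,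
      Polynomial.eval₂_C] at this
    exact eq_neg_of_add_eq_zero_left this
  let φ0 : MvPolynomial (Fin (d + 1)) k →ₐ[k] AdjoinRoot F :=
    aeval (Fin.snoc (α := fun _ => AdjoinRoot F)
      (fun i => AdjoinRoot.of F (Ideal.Quotient.mk J (X i))) (AdjoinRoot.root F))
  have hφc : ∀ p, φ0 (rename Fin.castSucc p) = AdjoinRoot.of F (Ideal.Quotient.mk J p) := by
    intro p
    let ψ : MvPolynomial (Fin d) k →ₐ[k] AdjoinRoot F :=
      (AdjoinRoot.ofAlgHom k F).comp (Ideal.Quotient.mkₐ k J)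
    have : φ0.comp (rename Fin.castSucc) = ψ := by
      ext i
      simp [φ0, ψ]
      rfl
    exact DFunLike.congr_fun this p
  have hφl : φ0 (X (Fin.last d)) = AdjoinRoot.root F := by simp [φ0]
  have hφ : ∀ a ∈ I, φ0 a = 0 := by
    intro a ha
    have : I ≤ RingHom.ker φ0 := by
      rw [hI, Ideal.span_le]
      rintro _ (⟨i, rfl⟩ | rfl)
      · refine Fin.lastCases ?_ (fun i => ?_) i
        · simp only [SetLike.mem_coe, RingHom.mem_ker, map_pow, hφl]
          rw [hq, pow_mul, hroot, neg_pow, ← map_pow, hgb]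
          simp
        · have h1 : (X i.castSucc : MvPolynomial (Fin (d+1)) k) ^ q =
            rename Fin.castSucc (X i ^ q) := by simp
          simp only [SetLike.mem_coe, RingHom.mem_ker]
          rw [h1, hφc, Ideal.Quotient.eq_zero_iff_mem.2, map_zero]
          exact Ideal.subset_span (Or.inl ⟨i, rfl⟩)
      · simp only [SetLike.mem_coe, RingHom.mem_ker]
        rw [map_add, map_pow, hφl, hroot, hφc]
        simp [gb]
    exact this ha
  let φ : (MvPolynomial (Fin (d + 1)) k ⧸ I) →ₐ[k] AdjoinRoot F := Ideal.Quotient.liftₐ I φ0 hφ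
  let Q := MvPolynomial (Fin (d + 1)) k ⧸ I
  have hrel : Ideal.Quotient.mk I (rename Fin.castSucc g) =
      - (Ideal.Quotient.mk I (X (Fin.last d))) ^ 3 := by
    rw [eq_neg_iff_add_eq_zero, ← map_pow, ← map_add, Ideal.Quotient.eq_zero_iff_mem]
    exact Ideal.subset_span (Or.inr rfl)
  have hXq : ∀ i, (Ideal.Quotient.mk I (X i)) ^ q = 0 := fun i => by
    rw [← map_pow, Ideal.Quotient.eq_zero_iff_mem]
    exact Ideal.subset_span (Or.inl ⟨i, rfl⟩)
  let ψ0 : MvPolynomial (Fin d) k →ₐ[k] Q :=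
    (Ideal.Quotient.mkₐ k I).comp (rename Fin.castSucc)
  have hψ0 : ∀ a ∈ J, ψ0 a = 0 := by
    intro a ha
    have : J ≤ RingHom.ker ψ0 := by
      rw [hJ, Ideal.span_le]
      rintro _ (⟨i, rfl⟩ | rfl)
      · simp only [SetLike.mem_coe, RingHom.mem_ker]
        simpa [ψ0] using hXq i.castSucc
      · simp only [SetLike.mem_coe, RingHom.mem_ker, map_pow]
        change (Ideal.Quotient.mk I (rename Fin.castSucc g)) ^ r = 0
        rw [hrel]
        have h0 := hXq (Fin.last d)
        rw [hq, pow_mul] at h0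
        generalize (Ideal.Quotient.mk I (X (Fin.last d))) = y at h0 ⊢
        have h9 : (-y ^ 3) ^ r = (-1) ^ r * (y ^ 3) ^ r := neg_pow (y ^ 3) r
        exact h9.trans (by rw [h0, mul_zero])
    exact this ha
  let ψ1 : B →ₐ[k] Q := Ideal.Quotient.liftₐ J ψ0 hψ0
  let ψ : AdjoinRoot F →ₐ[k] Q := AdjoinRoot.liftAlgHom F ψ1 (Ideal.Quotient.mk I (X (Fin.last d)))
    (by
      have h1 : ψ1 gb = Ideal.Quotient.mk I (rename Fin.castSucc g) := rfl
      simp only [F, Polynomial.eval₂_add, Polynomial.eval₂_pow, Polynomial.eval₂_X,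
        Polynomial.eval₂_C]
      change _ + ψ1 gb = 0
      rw [h1, hrel]
      ring)
  have hψof : ∀ b, ψ (AdjoinRoot.of F b) = ψ1 b := fun b => by simp [ψ]
  have hψr : ψ (AdjoinRoot.root F) = Ideal.Quotient.mk I (X (Fin.last d)) := by simp [ψ]
  have c1 : ψ.comp φ = AlgHom.id k _ := by
    apply Ideal.Quotient.algHom_ext
    ext i
    change ψ (φ0 (X i)) = Ideal.Quotient.mk I (X i)
    refine Fin.lastCases ?_ (fun i => ?_) i
    · rw [hφl, hψr]
    · have h1 : (X i.castSucc : MvPolynomial (Fin (d+1)) k) =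
            rename Fin.castSucc (X i) := by simp
      rw [h1, hφc, hψof]
      rfl
  have c2 : ∀ x, φ (ψ x) = x := by
    intro x
    induction x using AdjoinRoot.induction_on with
    | ih p =>
      induction p using Polynomial.induction_on' with
      | add p q hp hq => simp only [map_add, hp, hq]
      | monomial n b =>
        rw [← Polynomial.C_mul_X_pow_eq_monomial]
        simp only [map_mul, map_pow, AdjoinRoot.mk_C, AdjoinRoot.mk_X, hψof, hψr]
        congr 1
        · obtain ⟨b, rfl⟩ := Ideal.Quotient.mk_surjective b
          exact hφc b
        · congr 1
  let E : Q ≃ₗ[k] AdjoinRoot F := LinearEquiv.ofBijective φ.toLinearMap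
    ⟨fun x y h => by
      have h' := congrArg ψ h
      have hx := DFunLike.congr_fun c1 x
      have hy := DFunLike.congr_fun c1 y
      exact hx.symm.trans (h'.trans hy), fun x => ⟨ψ x, c2 x⟩⟩
  rw [show Module.finrank k (MvPolynomial (Fin (d + 1)) k ⧸ I) = _ from E.finrank_eq]
  rcases subsingleton_or_nontrivial B with hB | hB
  · have : Subsingleton (AdjoinRoot F) := Module.subsingleton B _
    rw [Module.finrank_zero_of_subsingleton,
      show Module.finrank k (MvPolynomial (Fin d) k ⧸ J) = 0 from
        Module.finrank_zero_of_subsingleton (M := B)]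
  have hdeg : F.natDegree = 3 := Polynomial.natDegree_X_pow_add_C
  have : Module.Free B (AdjoinRoot F) := Module.Free.of_basis (AdjoinRoot.powerBasis' hF).basis
  have h2 : Module.finrank B (AdjoinRoot F) = 3 := by
    rw [(AdjoinRoot.powerBasis' hF).finrank, AdjoinRoot.powerBasis'_dim, hdeg]
  rw [← Module.finrank_mul_finrank k B (AdjoinRoot F), h2, mul_comm]

/-- The Hilbert–Kunz function of the `A₂` singularity in characteristic 3 satisfies
`HK_e(S_{3,d}) = 3^{d(e−1)+1} · HK_1(R_{3,d−1})`. -/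
theorem HK_function_A2_char_three (k : Type*) [Field k] [CharP k 3]
    (d : ℕ) (hd : 1 ≤ d) (e : ℕ) (he : 1 ≤ e) :
    HKfun k (d + 1) 3 e
        ((∑ i : Fin d, (X (i.castSucc) : MvPolynomial (Fin (d + 1)) k) ^ 2) +
          X (Fin.last d) ^ 3) =
      3 ^ (d * (e - 1) + 1) * HKfun k d 3 1 (∑ i : Fin d, X i ^ 2) := by
  obtain ⟨e, rfl⟩ := Nat.exists_eq_add_of_le' he
  have h1 := a2_step1 k d (3 ^ (e + 1)) (3 ^ e) (by ring) (∑ i : Fin d, X i ^ 2)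
  have h2 := a2_finrank_expand k d (3 ^ e)
    (Set.range (fun i : Fin d => (X i : MvPolynomial (Fin d) k) ^ 3 ^ 1) ∪ {∑ i : Fin d, X i ^ 2})
  have : Fact (Nat.Prime 3) := ⟨Nat.prime_three⟩
  have h3 : (expand (3 ^ e) : MvPolynomial (Fin d) k →ₐ[k] _) ''
      (Set.range (fun i : Fin d => (X i : MvPolynomial (Fin d) k) ^ 3 ^ 1) ∪ {∑ i : Fin d, X i ^ 2}) =
      Set.range (fun i : Fin d => (X i : MvPolynomial (Fin d) k) ^ 3 ^ (e + 1)) ∪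
        {(∑ i : Fin d, X i ^ 2) ^ 3 ^ e} := by
    rw [Set.image_union, ← Set.range_comp, Set.image_singleton, sum_pow_char_pow]
    congr 2
    · funext i
      simp only [Function.comp, map_pow, expand_X, ← pow_mul]
      congr 1
    · simp [← pow_mul, mul_comm]
  rw [h3] at h2
  rw [h2] at h1
  have h4 : rename Fin.castSucc (∑ i : Fin d, (X i : MvPolynomial (Fin d) k) ^ 2) =
      ∑ i : Fin d, (X (i.castSucc) : MvPolynomial (Fin (d + 1)) k) ^ 2 := by
    simp only [map_sum, map_pow, rename_X]
  rw [h4] at h1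
  rw [HKfun, HKfun, h1, Nat.add_sub_cancel]
  ring
end

section
/- Let k be a field of characteristic 3 and d ≥ 2. The real sequence e ↦ dim_k( k[x_0,…,x_d]/(x_0^{3^e},…,x_d^{3^e}, x_0² + ⋯ + x_{d−1}² + x_d³) ) / 3^{d·e} converges as e → ∞ to 1 + (2/3)^{d−1}. That is, the Hilbert–Kunz multiplicity of the A_2 singularity in characteristic 3 is e_HK(S_{3,d}) = 1 + (2/3)^{d−1}. -/
open MvPolynomial

universe u

lemma hk_ext {k : Type u} [Field k] {n q : ℕ} {A : Type u} [CommRing A] [Algebra k A]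
    (φ : MvPolynomial (Fin n) k →ₐ[k] A) (hs : Function.Surjective φ)
    (hk : RingHom.ker φ = Ideal.span (Set.range fun i : Fin n => (X i : MvPolynomial (Fin n) k) ^ q)) :
    ∃ Φ : MvPolynomial (Fin (n+1)) k →ₐ[k] Polynomial A, Function.Surjective Φ ∧
      (∀ i, Φ (X i.castSucc) = Polynomial.C (φ (X i))) ∧ Φ (X (Fin.last n)) = Polynomial.X ∧
      RingHom.ker Φ = Ideal.span
        (Set.range fun i : Fin n => (X i.castSucc : MvPolynomial (Fin (n+1)) k) ^ q) := by
  let E : MvPolynomial (Fin (n+1)) k ≃ₐ[k] Polynomial (MvPolynomial (Fin n) k) :=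
    (renameEquiv k finSuccEquivLast).trans (optionEquivLeft k (Fin n))
  have E1 : ∀ i : Fin n, E (X i.castSucc) = Polynomial.C (X i) := by
    intro i; simp [E, optionEquivLeft_X_some]
  have E2 : E (X (Fin.last n)) = Polynomial.X := by
    simp [E, optionEquivLeft_X_none]
  refine ⟨(Polynomial.mapAlgHom φ).comp E.toAlgHom, ?_, ?_, ?_, ?_⟩
  · exact (Polynomial.map_surjective φ.toRingHom hs).comp E.surjective
  · intro i; simp [E1]
  · simp [E2]
  · have h1 : RingHom.ker ((Polynomial.mapAlgHom φ).comp E.toAlgHom) =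
      Ideal.comap E (RingHom.ker (Polynomial.mapRingHom φ.toRingHom)) := by
      ext x; simp [RingHom.mem_ker, Ideal.mem_comap]
    have h2 : RingHom.ker φ.toRingHom = RingHom.ker φ := rfl
    rw [h1, Polynomial.ker_mapRingHom, h2, hk, Ideal.map_span]
    have h3 : (Polynomial.C '' Set.range fun i : Fin n => (X i : MvPolynomial (Fin n) k) ^ q)
       = E '' (Set.range fun i : Fin n => (X i.castSucc : MvPolynomial (Fin (n+1)) k) ^ q) := by
      rw [← Set.range_comp, ← Set.range_comp]
      congr 1; ext1 i; simp [E1]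
    rw [h3, ← Ideal.map_span, Ideal.comap_map_of_bijective E E.bijective]

lemma hk_ker_pi {k : Type u} [Field k] {A : Type u} [AddCommGroup A] [Module k A] [Module.Finite k A]
    (f : A →ₗ[k] A) (r : ℕ) :
    Module.finrank k (LinearMap.ker (f.compLeft (Fin r))) = r * Module.finrank k (LinearMap.ker f) := by
  have e : LinearMap.ker (f.compLeft (Fin r)) ≃ₗ[k] (Fin r → LinearMap.ker f) :=
    { toFun := fun x i => ⟨x.1 i, by
        have := congrFun (LinearMap.mem_ker.1 x.2) i
        simpa using this⟩
      invFun := fun y => ⟨fun i => (y i).1, by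
        rw [LinearMap.mem_ker]; ext i; simp⟩
      map_add' := fun _ _ => rfl
      map_smul' := fun _ _ => rfl
      left_inv := fun _ => rfl
      right_inv := fun _ => rfl }
  rw [e.finrank_eq, Module.finrank_pi_fintype]; simp

lemma hk_ker1 {k : Type u} [Field k] {V W : Type u} [AddCommGroup V] [Module k V] [Module.Finite k V]
    [AddCommGroup W] [Module k W] (T : V →ₗ[k] V) (F : W →ₗ[k] W) (Ψ : W ≃ₗ[k] V × V × V)
    (h : ∀ x, Ψ (F x) = (T (Ψ x).1, T (Ψ x).2.1, T (Ψ x).2.2 + (Ψ x).1)) :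
    Module.finrank k (LinearMap.ker F) =
      Module.finrank k (LinearMap.ker T) + Module.finrank k (LinearMap.ker (T ∘ₗ T)) := by
  have hm : ∀ x, F x = 0 ↔ T (Ψ x).1 = 0 ∧ T (Ψ x).2.1 = 0 ∧ T (Ψ x).2.2 + (Ψ x).1 = 0 := by
    intro x
    rw [← Ψ.map_eq_zero_iff, h]; simp [Prod.ext_iff]
  have e : LinearMap.ker F ≃ₗ[k] LinearMap.ker T × LinearMap.ker (T ∘ₗ T) :=
    { toFun := fun x => (⟨(Ψ x.1).2.1, ((hm _).1 x.2).2.1⟩, ⟨(Ψ x.1).2.2, by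
        obtain ⟨h1, h2, h3⟩ := (hm _).1 x.2
        have := congrArg T h3
        simpa [h1] using this⟩)
      invFun := fun y => ⟨Ψ.symm (- T y.2.1, y.1.1, y.2.1), by
        rw [LinearMap.mem_ker, hm]
        have h1 := y.1.2
        have h2 := y.2.2
        simp only [LinearMap.mem_ker, LinearMap.comp_apply] at h1 h2
        simp [h1, h2]⟩
      map_add' := fun _ _ => by ext <;> simp
      map_smul' := fun _ _ => by ext <;> simp
      left_inv := fun x => by
        obtain ⟨h1, h2, h3⟩ := (hm _).1 x.2
        apply Subtype.ext
        apply Ψ.injective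
        have : - T (Ψ x.1).2.2 = (Ψ x.1).1 := by rw [neg_eq_iff_add_eq_zero]; exact h3
        simp [this]
      right_inv := fun y => by ext <;> simp }
  rw [e.finrank_eq, Module.finrank_prod]

lemma hk_ker2 {k : Type u} [Field k] [CharP k 3] {V W : Type u} [AddCommGroup V] [Module k V] [Module.Finite k V]
    [AddCommGroup W] [Module k W] (T : V →ₗ[k] V) (F : W →ₗ[k] W) (Ψ : W ≃ₗ[k] V × V × V)
    (hT : ∀ v, T (T (T v)) = 0)
    (h : ∀ x, Ψ (F x) = (T (Ψ x).1, T (Ψ x).2.1, T (Ψ x).2.2 + (Ψ x).1)) :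
    Module.finrank k (LinearMap.ker (F ∘ₗ F)) =
      Module.finrank k (LinearMap.ker (T ∘ₗ T)) + (Module.finrank k (LinearMap.ker T) +
        Module.finrank k V) := by
  have h3 : ∀ v : V, v + v + v = 0 := by
    intro v
    have : ((3 : ℕ) : k) • v = 0 := by rw [CharP.cast_eq_zero]; simp
    rw [Nat.cast_smul_eq_nsmul] at this
    rw [← this]; abel
  have hm : ∀ x, F (F x) = 0 ↔ T (T (Ψ x).1) = 0 ∧ T (T (Ψ x).2.1) = 0 ∧
      T (T (Ψ x).2.2) = T (Ψ x).1 := by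
    intro x
    rw [← Ψ.map_eq_zero_iff, h, h]
    simp only [Prod.ext_iff, Prod.fst_zero, Prod.snd_zero, map_add]
    have : T (T (Ψ x).2.2) + T (Ψ x).1 + T (Ψ x).1 = 0 ↔ T (T (Ψ x).2.2) = T (Ψ x).1 := by
      have := h3 (T (Ψ x).1)
      rw [← sub_eq_zero (a := T (T (Ψ x).2.2)), ← add_zero (_ - _), ← this]
      have e : T (T (Ψ x).2.2) - T (Ψ x).1 + (T (Ψ x).1 + T (Ψ x).1 + T (Ψ x).1) =
        T (T (Ψ x).2.2) + T (Ψ x).1 + T (Ψ x).1 := by abel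
      rw [e, this]
    rw [this]
  have e : LinearMap.ker (F ∘ₗ F) ≃ₗ[k] LinearMap.ker (T ∘ₗ T) × LinearMap.ker T × V :=
    { toFun := fun x => (⟨(Ψ x.1).2.1, ((hm _).1 x.2).2.1⟩, ⟨(Ψ x.1).1 - T (Ψ x.1).2.2, by
        obtain ⟨h1, h2, h3⟩ := (hm _).1 x.2
        simp [h3]⟩, (Ψ x.1).2.2)
      invFun := fun y => ⟨Ψ.symm (y.2.1.1 + T y.2.2, y.1.1, y.2.2), by
        rw [LinearMap.mem_ker, LinearMap.comp_apply, hm]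
        have h1 := y.1.2
        have h2 := y.2.1.2
        simp only [LinearMap.mem_ker, LinearMap.comp_apply] at h1 h2
        simp [h1, h2, hT]⟩
      map_add' := fun _ _ => by ext <;> simp; abel
      map_smul' := fun _ _ => by ext <;> simp [smul_sub]
      left_inv := fun x => by
        apply Subtype.ext
        apply Ψ.injective
        simp
      right_inv := fun y => by ext <;> simp }
  rw [e.finrank_eq, Module.finrank_prod, Module.finrank_prod]

lemma hk_psi {k : Type u} [Field k] {A : Type u} [CommRing A] [Algebra k A] (r : ℕ) (t : A) :
    ∃ Ψ : (Polynomial A ⧸ Ideal.span {(Polynomial.X ^ (3 * r) : Polynomial A)}) ≃ₗ[k]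
      (Fin r → A) × (Fin r → A) × (Fin r → A),
      ∀ x, Ψ (LinearMap.mulLeft k (Ideal.Quotient.mk _ (Polynomial.C t + Polynomial.X ^ (2 * r))) x) =
       ((LinearMap.mulLeft k t).compLeft (Fin r) (Ψ x).1,
        (LinearMap.mulLeft k t).compLeft (Fin r) (Ψ x).2.1,
        (LinearMap.mulLeft k t).compLeft (Fin r) (Ψ x).2.2 + (Ψ x).1) := by
  let L : Polynomial A →ₗ[k] (Fin r → A) × (Fin r → A) × (Fin r → A) :=
    { toFun := fun p => (fun j => p.coeff j, fun j => p.coeff (r + j), fun j => p.coeff (2 * r + j))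
      map_add' := fun _ _ => by ext <;> simp
      map_smul' := fun _ _ => by ext <;> simp }
  have hL : Function.Surjective L := by
    rintro ⟨a, b, c⟩
    let g : ℕ → A := fun n => if h : n < r then a ⟨n, h⟩ else if h : n - r < r then b ⟨n - r, h⟩
      else if h : n - 2 * r < r then c ⟨n - 2 * r, h⟩ else 0
    refine ⟨∑ n ∈ Finset.range (3 * r), Polynomial.monomial n (g n), ?_⟩
    have hc : ∀ m < 3 * r, (∑ n ∈ Finset.range (3 * r), Polynomial.monomial n (g n)).coeff m = g m := by
      intro m hm
      simp [Polynomial.coeff_monomial, hm]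
    refine Prod.ext ?_ (Prod.ext ?_ ?_) <;> funext j <;> have := j.2
    · refine (hc _ (by omega)).trans ?_
      simp [g]
    · refine (hc _ (by omega)).trans ?_
      simp [g]
    · refine (hc _ (by omega)).trans ?_
      have h1 : ¬ (2 * r + (j : ℕ) < r) := by omega
      have h2 : ¬ (2 * r + (j : ℕ) - r < r) := by omega
      simp [g, h1, h2]
  have hker : ∀ p, L p = 0 ↔ p ∈ Ideal.span {(Polynomial.X ^ (3 * r) : Polynomial A)} := by
    intro p
    rw [Ideal.mem_span_singleton, Polynomial.X_pow_dvd_iff]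
    constructor
    · intro h m hm
      have h1 := congrArg Prod.fst h
      have h2 := congrArg (fun z => z.2.1) h
      have h3 := congrArg (fun z => z.2.2) h
      by_cases c1 : m < r
      · exact congrFun h1 ⟨m, c1⟩
      by_cases c2 : m < 2 * r
      · have := congrFun h2 ⟨m - r, by omega⟩
        change p.coeff (r + (m - r)) = 0 at this
        rwa [show r + (m - r) = m by omega] at this
      · have := congrFun h3 ⟨m - 2 * r, by omega⟩
        change p.coeff (2 * r + (m - 2 * r)) = 0 at this
        rwa [show 2 * r + (m - 2 * r) = m by omega] at this
    · intro h
      refine Prod.ext ?_ (Prod.ext ?_ ?_) <;> funext j <;> have := j.2 <;> exact h _ (by omega)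
  let S : Submodule k (Polynomial A) :=
    (Ideal.span {(Polynomial.X ^ (3 * r) : Polynomial A)}).restrictScalars k
  let Q : (Polynomial A ⧸ Ideal.span {(Polynomial.X ^ (3 * r) : Polynomial A)}) →ₗ[k]
      (Fin r → A) × (Fin r → A) × (Fin r → A) := S.liftQ L (fun p hp => (hker p).2 hp)
  have hQ : ∀ p, Q (Ideal.Quotient.mk _ p) = L p := fun p => rfl
  have hb : Function.Bijective Q := by
    constructor
    · rw [injective_iff_map_eq_zero]
      intro x hx
      obtain ⟨p, rfl⟩ := Ideal.Quotient.mk_surjective x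
      rw [hQ, hker] at hx
      exact Ideal.Quotient.eq_zero_iff_mem.2 hx
    · intro y
      obtain ⟨p, hp⟩ := hL y
      exact ⟨Ideal.Quotient.mk _ p, hp⟩
  refine ⟨LinearEquiv.ofBijective Q hb, ?_⟩
  intro x
  obtain ⟨p, rfl⟩ := Ideal.Quotient.mk_surjective x
  rw [LinearMap.mulLeft_apply, ← map_mul]
  simp only [LinearEquiv.ofBijective_apply, hQ]
  refine Prod.ext ?_ (Prod.ext ?_ ?_) <;> funext j <;> have := j.2
  · change ((Polynomial.C t + Polynomial.X ^ (2 * r)) * p).coeff _ = t * p.coeff _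
    rw [add_mul, Polynomial.coeff_add, Polynomial.coeff_C_mul, Polynomial.coeff_X_pow_mul', if_neg (by omega), add_zero]
  · change ((Polynomial.C t + Polynomial.X ^ (2 * r)) * p).coeff _ = t * p.coeff _
    rw [add_mul, Polynomial.coeff_add, Polynomial.coeff_C_mul, Polynomial.coeff_X_pow_mul', if_neg (by omega), add_zero]
  · change ((Polynomial.C t + Polynomial.X ^ (2 * r)) * p).coeff _ = t * p.coeff _ + p.coeff _
    rw [add_mul, Polynomial.coeff_add, Polynomial.coeff_C_mul, Polynomial.coeff_X_pow_mul', if_pos (by omega), Nat.add_sub_cancel_left]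

lemma hk_range {M : Type u} {n : ℕ} (f : Fin (n + 1) → M) :
    Set.range f = Set.range (fun i : Fin n => f i.castSucc) ∪ {f (Fin.last n)} := by
  ext x
  simp only [Set.mem_union, Set.mem_singleton_iff, Set.mem_range]
  constructor
  · rintro ⟨i, rfl⟩
    induction i using Fin.lastCases with
    | last => right; rfl
    | cast i => left; exact ⟨i, rfl⟩
  · rintro (⟨i, rfl⟩ | rfl)
    · exact ⟨_, rfl⟩
    · exact ⟨_, rfl⟩

def hkab : ℕ → ℕ × ℕ
  | 0 => (1, 1)
  | n + 1 => ((hkab n).1 + (hkab n).2, 3 ^ n + (hkab n).1 + (hkab n).2)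

lemma hkab_closed (n : ℕ) : (hkab (n + 1)).1 = 3 ^ n + 2 ^ n ∧ (hkab (n + 1)).2 = 2 * 3 ^ n + 2 ^ n := by
  induction n with
  | zero => simp [hkab]
  | succ n ih =>
    obtain ⟨h1, h2⟩ := ih
    rw [hkab, h1, h2]
    simp only [pow_succ]
    constructor <;> ring

lemma hk_good {k : Type u} [Field k] [CharP k 3] (r : ℕ) (n : ℕ) :
    ∃ (A : Type u) (_ : CommRing A) (_ : Algebra k A) (_ : Module.Finite k A)
      (φ : MvPolynomial (Fin n) k →ₐ[k] A), Function.Surjective φ ∧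
      RingHom.ker φ = Ideal.span (Set.range fun i : Fin n => (X i : MvPolynomial (Fin n) k) ^ (3 * r)) ∧
      Module.finrank k A = (3 * r) ^ n ∧
      ∃ t : A, t = φ (∑ i, X i ^ (2 * r)) ∧ t ^ 3 = 0 ∧
        Module.finrank k (LinearMap.ker (LinearMap.mulLeft k t)) = r ^ n * (hkab n).1 ∧
        Module.finrank k (LinearMap.ker (LinearMap.mulLeft k t ∘ₗ LinearMap.mulLeft k t)) =
          r ^ n * (hkab n).2 := by
  induction n with
  | zero =>
    refine ⟨k, inferInstance, inferInstance, inferInstance,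
      (isEmptyAlgEquiv k (Fin 0)).toAlgHom, (isEmptyAlgEquiv k (Fin 0)).surjective, ?_, by simp,
      0, by simp, by simp, ?_, ?_⟩
    · rw [Set.range_eq_empty, Ideal.span_empty]
      exact (RingHom.injective_iff_ker_eq_bot _).1 (isEmptyAlgEquiv k (Fin 0)).injective
    · rw [LinearMap.mulLeft_zero_eq_zero, LinearMap.ker_zero, finrank_top]; simp [hkab]
    · rw [LinearMap.mulLeft_zero_eq_zero, LinearMap.comp_zero, LinearMap.ker_zero, finrank_top]; simp [hkab]
  | succ n ih =>
    obtain ⟨A, _, _, _, φ, hs, hk, hf, t, ht, ht3, h1, h2⟩ := ih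
    obtain ⟨Φ, Φs, Φ1, Φ2, Φk⟩ := hk_ext φ hs hk
    obtain ⟨Ψ, hΨ⟩ := hk_psi (k := k) r t
    have hcomp : ((LinearMap.mulLeft k t).compLeft (Fin r)) ∘ₗ ((LinearMap.mulLeft k t).compLeft (Fin r))
      = (LinearMap.mulLeft k t ∘ₗ LinearMap.mulLeft k t).compLeft (Fin r) := rfl
    let I := Ideal.span {(Polynomial.X ^ (3 * r) : Polynomial A)}
    have hfin : Module.finrank k (Fin r → A) = r * (3 * r) ^ n := by
      rw [Module.finrank_pi_fintype]; simp [hf]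
    refine ⟨Polynomial A ⧸ I, inferInstance, inferInstance, Module.Finite.equiv Ψ.symm,
      (Ideal.Quotient.mkₐ k I).comp Φ, (Ideal.Quotient.mkₐ_surjective k I).comp Φs, ?_, ?_,
      Ideal.Quotient.mk I (Polynomial.C t + Polynomial.X ^ (2 * r)), ?_, ?_, ?_, ?_⟩
    · have e1 : RingHom.ker ((Ideal.Quotient.mkₐ k I).comp Φ) = Ideal.comap Φ I := by
        ext x
        simp [RingHom.mem_ker, Ideal.mem_comap, Ideal.Quotient.eq_zero_iff_mem]
      have e2 : I = Ideal.map Φ (Ideal.span {X (Fin.last n) ^ (3 * r)}) := by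
        rw [Ideal.map_span]; simp [I, Φ2]
      rw [e1, e2, Ideal.comap_map_of_surjective' Φ Φs, Φk, ← Ideal.span_union]
      rw [hk_range, Set.union_comm]
    · rw [Ψ.finrank_eq, Module.finrank_prod, Module.finrank_prod, hfin]; ring
    · rw [Fin.sum_univ_castSucc]
      simp [ht, Φ1, Φ2]
    · rw [← map_pow, Ideal.Quotient.eq_zero_iff_mem, Ideal.mem_span_singleton]
      have h3 : (3 : Polynomial A) = 0 := by
        have : algebraMap k (Polynomial A) ((3 : ℕ) : k) = 0 := by
          rw [CharP.cast_eq_zero, map_zero]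
        rw [map_natCast] at this
        exact_mod_cast this
      have hC : (Polynomial.C t) ^ 3 = 0 := by rw [← Polynomial.C_pow, ht3, Polynomial.C_0]
      refine ⟨Polynomial.X ^ (3 * r), ?_⟩
      rw [← pow_add, show 3 * r + 3 * r = 2 * r * 3 by ring, pow_mul]
      linear_combination hC + (Polynomial.C t ^ 2 * Polynomial.X ^ (2 * r) + Polynomial.C t * (Polynomial.X ^ (2 * r)) ^ 2) * h3
    · rw [hk_ker1 _ _ Ψ hΨ, hcomp, hk_ker_pi, hk_ker_pi, h1, h2, hkab]; ring
    · rw [hk_ker2 _ _ Ψ _ hΨ, hcomp, hk_ker_pi, hk_ker_pi, h1, h2, hkab, hfin, mul_pow]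
      · ring
      · intro v
        funext i
        change t * (t * (t * v i)) = 0
        linear_combination v i * ht3

lemma hk_quot {k : Type u} [Field k] {A : Type u} [CommRing A] [Algebra k A] [Module.Finite k A] (s : A) :
    Module.finrank k (A ⧸ Ideal.span {s}) = Module.finrank k (LinearMap.ker (LinearMap.mulLeft k s)) := by
  have h1 := LinearMap.finrank_range_add_finrank_ker (LinearMap.mulLeft k s)
  have h2 := Submodule.finrank_quotient_add_finrank (LinearMap.range (LinearMap.mulLeft k s))
  have h3 : LinearMap.range (LinearMap.mulLeft k s) = (Ideal.span {s}).restrictScalars k := by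
    ext x
    simp [Ideal.mem_span_singleton, dvd_def, eq_comm]
  have h4 : Module.finrank k (A ⧸ LinearMap.range (LinearMap.mulLeft k s)) =
      Module.finrank k (A ⧸ Ideal.span {s}) := by
    rw [h3]; rfl
  omega

lemma hk_adj {k : Type u} [Field k] {B : Type u} [CommRing B] [Algebra k B] [Module.Finite k B] (s : B) :
    Module.finrank k (AdjoinRoot (Polynomial.X ^ 3 + Polynomial.C s)) = 3 * Module.finrank k B := by
  rcases subsingleton_or_nontrivial B with hB | hB
  · have : Subsingleton (AdjoinRoot (Polynomial.X ^ 3 + Polynomial.C s)) :=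
      Module.subsingleton B _
    rw [Module.finrank_zero_of_subsingleton, Module.finrank_zero_of_subsingleton]
  have hm : (Polynomial.X ^ 3 + Polynomial.C s).Monic := Polynomial.monic_X_pow_add_C s (by norm_num)
  have hd : (AdjoinRoot.powerBasis' hm).dim = 3 := by
    simp [AdjoinRoot.powerBasis'_dim]
  have e := ((AdjoinRoot.powerBasis' hm).basis.equivFun).restrictScalars k
  rw [e.finrank_eq, Module.finrank_pi_fintype]
  simp [hd]

lemma hk_last {k : Type u} [Field k] {A : Type u} [CommRing A] [Algebra k A] [Module.Finite k A]
    (s : A) (r : ℕ) :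
    Module.finrank k (Polynomial A ⧸
      Ideal.span {(Polynomial.X ^ (3 * r) : Polynomial A), Polynomial.C s + Polynomial.X ^ 3}) =
    3 * Module.finrank k (LinearMap.ker (LinearMap.mulLeft k (s ^ r))) := by
  rw [← hk_quot]
  let I := Ideal.span {s ^ r}
  rw [← hk_adj (k := k) (Ideal.Quotient.mk I s)]
  let g := Polynomial.X ^ 3 + Polynomial.C (Ideal.Quotient.mk I s)
  let π : Polynomial A →ₐ[k] AdjoinRoot g :=
    (Ideal.Quotient.mkₐ k (Ideal.span {g})).comp (Polynomial.mapAlgHom (Ideal.Quotient.mkₐ k I))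
  have hms : Function.Surjective (Polynomial.mapRingHom (Ideal.Quotient.mk I)) :=
    Polynomial.map_surjective _ Ideal.Quotient.mk_surjective
  have hπ : Function.Surjective π := (Ideal.Quotient.mkₐ_surjective k _).comp hms
  have e1 : RingHom.ker π = Ideal.comap (Polynomial.mapRingHom (Ideal.Quotient.mk I)) (Ideal.span {g}) := by
    ext x
    rw [RingHom.mem_ker, Ideal.mem_comap, ← Ideal.Quotient.eq_zero_iff_mem]
    rfl
  have e2 : Ideal.span {g} = Ideal.map (Polynomial.mapRingHom (Ideal.Quotient.mk I))
      (Ideal.span {Polynomial.C s + Polynomial.X ^ 3}) := by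
    rw [Ideal.map_span]; simp [g, add_comm]
  have e3 : RingHom.ker π = Ideal.span {(Polynomial.X ^ (3 * r) : Polynomial A), Polynomial.C s + Polynomial.X ^ 3} := by
    rw [e1, e2, Ideal.comap_map_of_surjective' _ hms, Polynomial.ker_mapRingHom, Ideal.mk_ker,
      Ideal.map_span, Set.image_singleton]
    have hdvd : (Polynomial.C s + Polynomial.X ^ 3) ∣ Polynomial.X ^ (3 * r) - (-1) ^ r * Polynomial.C (s ^ r) := by
      have := sub_dvd_pow_sub_pow (Polynomial.X ^ 3 : Polynomial A) (- Polynomial.C s) r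
      rw [neg_pow, sub_neg_eq_add, add_comm, ← pow_mul, ← Polynomial.C_pow] at this
      exact this
    obtain ⟨c, hc⟩ := hdvd
    have hsq : ((-1 : Polynomial A) ^ r) * (-1) ^ r = 1 := by
      rw [← mul_pow]; simp
    apply le_antisymm
    · apply sup_le
      · exact Ideal.span_mono (by simp)
      · rw [Ideal.span_singleton_le_iff_mem, Ideal.mem_span_pair]
        refine ⟨(-1) ^ r, - (-1) ^ r * c, ?_⟩
        linear_combination (-1 : Polynomial A) ^ r * hc + Polynomial.C (s ^ r) * hsq
    · rw [Ideal.span_le, ← Ideal.span_union]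
      rintro x hx
      rw [Set.singleton_union]
      rcases hx with rfl | rfl
      · rw [SetLike.mem_coe, Ideal.mem_span_pair]
        refine ⟨c, (-1) ^ r, ?_⟩
        linear_combination -hc
      · exact Ideal.subset_span (by simp)
  rw [← e3]
  exact (Ideal.quotientKerAlgEquivOfSurjective hπ).toLinearEquiv.finrank_eq

lemma hk_value {k : Type u} [Field k] [CharP k 3] (d e : ℕ) :
    HKfun k (d + 1) 3 (e + 1) ((∑ i : Fin d, (X (i.castSucc) : MvPolynomial (Fin (d + 1)) k) ^ 2) +
              X (Fin.last d) ^ 3) = 3 * ((3 ^ e) ^ d * (hkab d).1) := by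
  obtain ⟨A, _, _, _, φ, hs, hk, hf, t, ht, ht3, h1, h2⟩ := hk_good (k := k) (3 ^ e) d
  obtain ⟨Φ, Φs, Φ1, Φ2, Φk⟩ := hk_ext φ hs hk
  have hts : t = (φ (∑ i, X i ^ 2)) ^ (3 ^ e) := by
    rw [ht, ← map_pow, sum_pow_char_pow]
    simp only [← pow_mul]
  rw [← h1, hts, ← hk_last]
  set J := Ideal.span {(Polynomial.X ^ (3 * 3 ^ e) : Polynomial A),
    Polynomial.C (φ (∑ i, X i ^ 2)) + Polynomial.X ^ 3} with hJ
  unfold HKfun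
  have e1 : RingHom.ker ((Ideal.Quotient.mkₐ k J).comp Φ) = Ideal.comap Φ J := by
    ext x
    simp [RingHom.mem_ker, Ideal.mem_comap, Ideal.Quotient.eq_zero_iff_mem]
  have e2 : J = Ideal.map Φ (Ideal.span {X (Fin.last d) ^ (3 * 3 ^ e),
      (∑ i : Fin d, (X (i.castSucc) : MvPolynomial (Fin (d + 1)) k) ^ 2) + X (Fin.last d) ^ 3}) := by
    rw [Ideal.map_span, Set.image_pair]; simp [J, Φ1, Φ2]
  have e3 : RingHom.ker ((Ideal.Quotient.mkₐ k J).comp Φ) = Ideal.span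
        (Set.range (fun i : Fin (d+1) => (X i : MvPolynomial (Fin (d+1)) k) ^ 3 ^ (e+1)) ∪
        {(∑ i : Fin d, (X (i.castSucc) : MvPolynomial (Fin (d + 1)) k) ^ 2) + X (Fin.last d) ^ 3}) := by
    rw [e1, e2, Ideal.comap_map_of_surjective' Φ Φs, Φk, ← Ideal.span_union, hk_range, pow_succ' 3 e]
    congr 1
    ext x
    simp only [Set.mem_union, Set.mem_insert_iff, Set.mem_singleton_iff]
    tauto
  rw [← e3]
  have hsurj : Function.Surjective ((Ideal.Quotient.mkₐ k J).comp Φ) :=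
    (Ideal.Quotient.mkₐ_surjective k J).comp Φs
  exact (Ideal.quotientKerAlgEquivOfSurjective hsurj).toLinearEquiv.finrank_eq

/-- The Hilbert–Kunz multiplicity of the `A₂` singularity in characteristic 3 is
`e_HK(S_{3,d}) = 1 + (2/3)^{d−1}`. -/
theorem eHK_A2_char_three (k : Type*) [Field k] [CharP k 3] (d : ℕ) (hd : 2 ≤ d) :
    Filter.Tendsto
      (fun e : ℕ =>
        (HKfun k (d + 1) 3 e
            ((∑ i : Fin d, (X (i.castSucc) : MvPolynomial (Fin (d + 1)) k) ^ 2) +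
              X (Fin.last d) ^ 3) : ℝ) / 3 ^ (d * e))
      Filter.atTop (nhds (1 + (2 / 3) ^ (d - 1))) := by
  apply tendsto_const_nhds.congr'
  filter_upwards [Filter.eventually_ge_atTop 1] with e he
  obtain ⟨e, rfl⟩ := Nat.exists_eq_add_of_le' he
  obtain ⟨d, rfl⟩ := Nat.exists_eq_add_of_le' (show 1 ≤ d by omega)
  rw [hk_value, (hkab_closed d).1, Nat.add_sub_cancel]
  push_cast
  rw [← pow_mul, div_pow, eq_div_iff (by positivity)]
  rw [show (d + 1) * (e + 1) = e * (d + 1) + d + 1 by ring, pow_add _ _ 1, pow_add _ _ d]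
  field_simp
end
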